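/- arXiv:1805.11323 — 2 statements merged into one kernel-verified Lean document; each statement's English description precedes it below -/
import Mathlib

section
/- For all n, m ≥ 0 and generic tuples ū=(u_1,…,u_n), v̄=(v_1,…,v_m), the multiple action of the modified diagonal operator ν_{22} on a modified Bethe vector is ν_{22}(ū) ν_{12}(v̄) |0⟩ = β_1^n Σ_{w̄ ⇒ {w̄_I, w̄_II}} (−β_1)^{−l} λ_2(w̄_I)·K^{(1)}_{n,l}(ū | w̄_I + c)·f(w̄_I, w̄_II)·ν_{12}(w̄_II) |0⟩, where w̄ = {ū, v̄}, the sum runs over all partitions of w̄ into two disjoint subtuples with no restriction on cardinalities, and l = #w̄_I. -/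
open scoped BigOperators

noncomputable section

/-- The rational function `g(u,v) = c/(u-v)`. -/
def gC (c u v : ℂ) : ℂ := c / (u - v)

/-- The rational function `f(u,v) = (u-v+c)/(u-v)`. -/
def fC (c u v : ℂ) : ℂ := (u - v + c) / (u - v)

/-- The rational function `h(u,v) = (u-v+c)/c`. -/
def hC (c u v : ℂ) : ℂ := (u - v + c) / c

/-- A family of parameters is generic if all pairwise differences avoid `0, ±c, ±2c`. -/
def Generic (c : ℂ) {ι : Type*} (w : ι → ℂ) : Prop :=
  ∀ i j, i ≠ j → w i - w j ≠ 0 ∧ w i - w j ≠ c ∧ w i - w j ≠ -c ∧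
    w i - w j ≠ 2 * c ∧ w i - w j ≠ -2 * c

/-- The modified Izergin determinant `K^{(z)}(x̄|ȳ)`. -/
def KIz (c z : ℂ) {ι κ : Type*} [Fintype ι] [Fintype κ] [DecidableEq κ]
    (x : ι → ℂ) (y : κ → ℂ) : ℂ :=
  Matrix.det (Matrix.of fun j k : κ =>
    -z * (if j = k then 1 else 0) +
      (∏ i, fC c (x i) (y j)) * (∏ i ∈ Finset.univ.erase j, fC c (y j) (y i))
        / hC c (y j) (y k))

/-- The conjugated modified Izergin determinant: `c` is replaced by `-c`. -/
def KIzBar (c z : ℂ) {ι κ : Type*} [Fintype ι] [Fintype κ] [DecidableEq κ]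
    (x : ι → ℂ) (y : κ → ℂ) : ℂ :=
  KIz (-c) z x y

/-- Restriction of a tuple to a subtuple indexed by a `Finset`. -/
def restr {p : ℕ} (w : Fin p → ℂ) (s : Finset (Fin p)) : {x // x ∈ s} → ℂ :=
  fun i => w i.1

/-- Double product `f(w̄_s, w̄_t)` over two subtuples of a tuple. -/
def fSS (c : ℂ) {p : ℕ} (w : Fin p → ℂ) (s t : Finset (Fin p)) : ℂ :=
  ∏ i ∈ s, ∏ j ∈ t, fC c (w i) (w j)

/-- Ordered product of operators over a subtuple (the operators pairwise commute,
so the order is irrelevant). -/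
def opProd {V : Type*} [AddCommGroup V] [Module ℂ V] {p : ℕ}
    (op : ℂ → Module.End ℂ V) (w : Fin p → ℂ) (s : Finset (Fin p)) : Module.End ℂ V :=
  ((s.sort (· ≤ ·)).map (fun i => op (w i))).prod

/-- The index subsets of a partition of `Fin p` into three parts. -/
def parts {p : ℕ} (σ : Fin p → Fin 3) (k : Fin 3) : Finset (Fin p) :=
  Finset.univ.filter (fun i => σ i = k)

/-! Write `A = ν₂₂`, `B = β₁ ν₁₂`, so that `A(x)|0⟩ = λ₂(x)|0⟩ + B(x)|0⟩`. The exchange relation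
between `A` and `B` yields `A(x̄)|0⟩ = ∑ λ₂(x̄_I) f(x̄_I, x̄_II) B(x̄_II)|0⟩` over all partitions of
`x̄`. The relation is symmetric in `A` and `B`, and the vacuum condition becomes
`B(x)|0⟩ = -λ₂(x)|0⟩ + A(x)|0⟩`, so `B(x̄)|0⟩` has the mirror expansion in products of `A`.
Hence `A(ū) B(v̄)|0⟩` is computed by expanding `B(v̄)|0⟩` in `A`, merging the products of `A`, and
expanding back in `B`; the coefficient that results from the two nested partitions is the Izergin
determinant, expanded in principal minors, which are Cauchy determinants. -/

section RationalFunctions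

open Finset

theorem fC_eq_one_add_gC (c : ℂ) {u v : ℂ} (h : u ≠ v) : fC c u v = 1 + gC c u v := by
  rw [fC, gC, add_div, div_self (sub_ne_zero.2 h)]

theorem gC_swap (c u v : ℂ) : gC c v u = -gC c u v := by
  rw [gC, gC, ← neg_sub, div_neg]

theorem fC_self (c u : ℂ) : fC c u u = 0 := by
  simp [fC]

theorem fC_ne_zero {c u v : ℂ} (h : u ≠ v) (hc : u - v + c ≠ 0) : fC c u v ≠ 0 :=
  div_ne_zero hc (sub_ne_zero.2 h)

theorem fC_add_add (c u v a : ℂ) : fC c (u + a) (v + a) = fC c u v := by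
  simp [fC]

-- No hypothesis `u ≠ v`: at `u = v` both sides are `0`, the right one because `x / 0 = 0`.
theorem fC_add_right (c u v : ℂ) : fC c u (v + c) = (fC c v u)⁻¹ := by
  rw [fC, fC, inv_div, ← neg_div_neg_eq]
  congr 1 <;> ring

theorem gC_mul_fC_left (c : ℂ) {x a b : ℂ} (hxa : x ≠ a) (hxb : x ≠ b) (hab : a ≠ b) :
    gC c x a * fC c x b = fC c a b * gC c x a + gC c b a * gC c x b := by
  have hxa := sub_ne_zero.2 hxa
  have hxb := sub_ne_zero.2 hxb
  have hab := sub_ne_zero.2 hab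
  rw [gC_swap c a b]
  unfold fC gC
  field_simp
  ring

theorem gC_mul_fC_right (c : ℂ) {x a b : ℂ} (hxa : x ≠ a) (hxb : x ≠ b) (hab : a ≠ b) :
    gC c x a * fC c b x = fC c b a * gC c x a - gC c b a * gC c x b := by
  rw [fC_eq_one_add_gC c hxb.symm, fC_eq_one_add_gC c hab.symm, gC_swap c x b]
  have hleft := gC_mul_fC_left c hxa hxb hab
  rw [fC_eq_one_add_gC c hxb, fC_eq_one_add_gC c hab, gC_swap c b a] at hleft
  linear_combination -hleft

theorem prod_fC_eq_one_add_sum {ι : Type*} [DecidableEq ι] (c : ℂ) {w : ι → ℂ}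
    (hw : Function.Injective w) {s : Finset ι} {z : ℂ} (hz : ∀ i ∈ s, w i ≠ z) :
    ∏ i ∈ s, fC c (w i) z =
      1 + ∑ x ∈ s, gC c (w x) z * ∏ i ∈ s.erase x, fC c (w i) (w x) := by
  induction s using Finset.induction_on generalizing z with
  | empty => simp
  | insert b s hb ih =>
    have hbz : w b ≠ z := hz b (mem_insert_self b s)
    have hsz : ∀ i ∈ s, w i ≠ z := fun i hi => hz i (mem_insert_of_mem hi)
    have hsb : ∀ i ∈ s, w i ≠ w b := fun i hi => hw.ne (ne_of_mem_of_not_mem hi hb)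
    have hsplit : ∀ x ∈ s, gC c (w x) z * ∏ i ∈ (insert b s).erase x, fC c (w i) (w x) =
        fC c (w b) z * (gC c (w x) z * ∏ i ∈ s.erase x, fC c (w i) (w x)) -
          gC c (w b) z * (gC c (w x) (w b) * ∏ i ∈ s.erase x, fC c (w i) (w x)) := by
      intro x hx
      have hbx : b ≠ x := (ne_of_mem_of_not_mem hx hb).symm
      rw [erase_insert_of_ne hbx, prod_insert (mt mem_of_mem_erase hb)]
      linear_combination gC_mul_fC_right c (hsz x hx) (hsb x hx) hbz.symm *
        ∏ i ∈ s.erase x, fC c (w i) (w x)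
    rw [prod_insert hb, sum_insert hb, erase_insert hb, sum_congr rfl hsplit, sum_sub_distrib,
      ← mul_sum, ← mul_sum, ih hsz, ih hsb, fC_eq_one_add_gC c hbz]
    ring

end RationalFunctions

section DoubleProducts

open Finset

variable {p : ℕ} (c : ℂ) (w : Fin p → ℂ)

theorem fSS_union_left {s s' : Finset (Fin p)} (h : Disjoint s s') (t : Finset (Fin p)) :
    fSS c w (s ∪ s') t = fSS c w s t * fSS c w s' t :=
  prod_union h

theorem fSS_union_right (s : Finset (Fin p)) {t t' : Finset (Fin p)} (h : Disjoint t t') :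
    fSS c w s (t ∪ t') = fSS c w s t * fSS c w s t' := by
  simp only [fSS, prod_union h, prod_mul_distrib]

theorem fSS_insert_left {a : Fin p} {s : Finset (Fin p)} (h : a ∉ s) (t : Finset (Fin p)) :
    fSS c w (insert a s) t = (∏ j ∈ t, fC c (w a) (w j)) * fSS c w s t :=
  prod_insert h

theorem fSS_insert_right (s : Finset (Fin p)) {a : Fin p} {t : Finset (Fin p)} (h : a ∉ t) :
    fSS c w s (insert a t) = (∏ i ∈ s, fC c (w i) (w a)) * fSS c w s t := by
  simp only [fSS, prod_insert h, prod_mul_distrib]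

theorem fSS_erase_mul_prod {s t : Finset (Fin p)} (hst : s ⊆ t) {x : Fin p} (hx : x ∈ s) :
    fSS c w (s.erase x) (t \ s.erase x) * ∏ j ∈ t \ s, fC c (w x) (w j) =
      (∏ i ∈ s.erase x, fC c (w i) (w x)) * fSS c w s (t \ s) := by
  have hs : fSS c w s (t \ s) =
      (∏ j ∈ t \ s, fC c (w x) (w j)) * fSS c w (s.erase x) (t \ s) := by
    rw [← fSS_insert_left c w (notMem_erase x s), insert_erase hx]
  rw [sdiff_erase (hst hx), fSS_insert_right c w _ (by simp [hx]), hs]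
  ring

theorem fSS_compl_mul_fSS_sdiff {s t : Finset (Fin p)} (hts : t ⊆ s) :
    fSS c w t tᶜ * fSS c w (s \ t) sᶜ = fSS c w t (s \ t) * fSS c w s sᶜ := by
  have ht : tᶜ = s \ t ∪ sᶜ := by grind [mem_compl]
  have hs : fSS c w s sᶜ = fSS c w t sᶜ * fSS c w (s \ t) sᶜ := by
    rw [← fSS_union_left c w disjoint_sdiff, union_sdiff_of_subset hts]
  rw [hs, ht, fSS_union_right c w t (disjoint_compl_right.mono_left sdiff_subset)]
  ring

variable {c w}

theorem fSS_ne_zero (hw : Function.Injective w) (hc : ∀ i j, w i - w j + c ≠ 0)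
    {s t : Finset (Fin p)} (h : Disjoint s t) : fSS c w s t ≠ 0 :=
  prod_ne_zero_iff.2 fun i hi => prod_ne_zero_iff.2 fun j hj =>
    fC_ne_zero (hw.ne (disjoint_iff_ne.1 h i hi j hj)) (hc i j)

variable (c w) in
theorem fSS_eq_zero {s t : Finset (Fin p)} (h : ¬Disjoint s t) : fSS c w s t = 0 := by
  obtain ⟨i, his, hit⟩ := not_disjoint_iff.1 h
  exact prod_eq_zero his (prod_eq_zero hit (fC_self c (w i)))

end DoubleProducts

section SubsetSums

open Finset

variable {ι M : Type*} [DecidableEq ι] [AddCommMonoid M]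

theorem sum_powerset_sum_sdiff (s : Finset ι) (F : Finset ι → ι → M) :
    ∑ t ∈ s.powerset, ∑ x ∈ s \ t, F t x = ∑ t ∈ s.powerset, ∑ x ∈ t, F (t.erase x) x := by
  rw [sum_sigma', sum_sigma']
  refine sum_bij' (fun q _ => ⟨insert q.2 q.1, q.2⟩) (fun q _ => ⟨q.1.erase q.2, q.2⟩)
    ?_ ?_ ?_ ?_ ?_ <;> rintro ⟨t, x⟩ h <;>
    simp only [mem_sigma, mem_powerset, mem_sdiff] at h ⊢
  · grind
  · grind
  · rw [erase_insert h.2.2]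
  · rw [insert_erase h.2]
  · rw [erase_insert h.2.2]

theorem sum_sum_powerset_compl [Fintype ι] (F : Finset ι → Finset ι → M) :
    ∑ t, ∑ r ∈ tᶜ.powerset, F t r = ∑ s, ∑ t ∈ s.powerset, F t (s \ t) := by
  rw [sum_sigma', sum_sigma']
  refine sum_bij' (fun q _ => ⟨q.1 ∪ q.2, q.1⟩) (fun q _ => ⟨q.2, q.1 \ q.2⟩)
    ?_ ?_ ?_ ?_ ?_ <;> rintro ⟨t, r⟩ h <;>
    simp only [mem_sigma, mem_univ, mem_powerset, true_and, subset_compl_iff_disjoint_left] at h ⊢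
  · exact subset_union_left
  · exact disjoint_sdiff
  · rw [union_sdiff_cancel_left h]
  · rw [union_sdiff_of_subset h]
  · rw [union_sdiff_cancel_left h]

end SubsetSums

section IzerginDeterminant

open Finset Matrix

theorem det_add_smul_one_eq_sum_minors {n R : Type*} [Fintype n] [DecidableEq n] [CommRing R]
    (M : Matrix n n R) (a : R) :
    (M + a • 1).det = ∑ s : Finset n, a ^ #sᶜ * (M.submatrix (↑) (↑) : Matrix s s R).det := by
  have hrows (s : Finset n) : s.piecewise M.row (a • (1 : Matrix n n R)).row =
      fun i => s.piecewise (fun _ => (1 : R)) (fun _ => a) i •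
        s.piecewise M.row (1 : Matrix n n R).row i := by
    ext i j
    by_cases hi : i ∈ s <;> simp [hi]
  calc (M + a • 1).det = ∑ s : Finset n,
        detRowAlternating (s.piecewise M.row (a • (1 : Matrix n n R)).row) :=
      detRowAlternating.map_add_univ M.row (a • (1 : Matrix n n R)).row
    _ = _ := sum_congr rfl fun s _ => by
      rw [hrows, AlternatingMap.map_smul_univ, ← det_piecewise_one_eq_submatrix_det,
        prod_piecewise]
      simp [compl_eq_univ_sdiff]
      rfl

theorem inv_hC_sub_inv_hC_mul_inv_hC {c x y z : ℂ} (hxy : x - y + c ≠ 0) (hxz : x - z + c ≠ 0)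
    (hzy : z - y + c ≠ 0) :
    (hC c x y)⁻¹ - (hC c x z)⁻¹ * (hC c z y)⁻¹ =
      (fC c x z)⁻¹ * ((fC c z y)⁻¹ * (hC c x y)⁻¹) := by
  simp only [hC, fC, inv_div]
  field_simp
  ring

-- Induction on `s`: the Schur complement of a diagonal entry, which is `1`, is a row and column
-- rescaling of the smaller determinant.
theorem det_submatrix_inv_hC {κ : Type*} [DecidableEq κ] {c : ℂ} {y : κ → ℂ}
    (hc : ∀ i j, y i - y j + c ≠ 0) (s : Finset κ) :
    ((of fun j k => (hC c (y j) (y k))⁻¹).submatrix (↑) (↑) : Matrix s s ℂ).det =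
      ∏ j ∈ s, ∏ k ∈ s.erase j, (fC c (y j) (y k))⁻¹ := by
  induction s using Finset.induction_on with
  | empty => simp
  | insert a s ha ih =>
    let H : Matrix κ κ ℂ := of fun j k => (hC c (y j) (y k))⁻¹
    let Hss : Matrix s s ℂ := H.submatrix (↑) (↑)
    let col : Matrix s Unit ℂ := H.submatrix (↑) fun _ => a
    let row : Matrix Unit s ℂ := H.submatrix (fun _ => a) (↑)
    let e : s ⊕ Unit ≃ (insert a s : Finset κ) :=
      ((subtypeInsertEquivOption ha).trans (Equiv.optionEquivSumPUnit _)).symm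
    have hblocks : (H.submatrix (↑) (↑) : Matrix (insert a s : Finset κ) _ ℂ).submatrix e e =
        fromBlocks Hss col row 1 := by
      have hca : c ≠ 0 := by simpa using hc a a
      ext (j | j) (k | k) <;> simp [e, H, Hss, col, row, subtypeInsertEquivOption, hC, hca]
    have hschur : Hss - col * row = of fun j k : s => (fC c (y j) (y a))⁻¹ *
        (of fun j k : s => (fC c (y a) (y k))⁻¹ * Hss j k) j k := by
      ext j k
      simpa [mul_apply, H, Hss, col, row] using
        inv_hC_sub_inv_hC_mul_inv_hC (hc j k) (hc j a) (hc a k)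
    have herase : ∀ j ∈ s, ∏ k ∈ (insert a s).erase j, (fC c (y j) (y k))⁻¹ =
        (fC c (y j) (y a))⁻¹ * ∏ k ∈ s.erase j, (fC c (y j) (y k))⁻¹ := by
      intro j hj
      rw [erase_insert_of_ne (ne_of_mem_of_not_mem hj ha).symm,
        prod_insert (mt mem_of_mem_erase ha)]
    rw [← det_submatrix_equiv_self e, hblocks, det_fromBlocks_one₂₂, hschur, det_mul_column,
      det_mul_row, ih, prod_insert ha, erase_insert ha, prod_congr rfl herase, prod_mul_distrib,
      prod_coe_sort s fun j => (fC c (y j) (y a))⁻¹, prod_coe_sort s fun k => (fC c (y a) (y k))⁻¹]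
    ring

theorem KIz_eq_sum {ι κ : Type*} [Fintype ι] [Fintype κ] [DecidableEq κ] (c z : ℂ)
    (x : ι → ℂ) {y : κ → ℂ} (hy : Function.Injective y) (hc : ∀ i j, y i - y j + c ≠ 0) :
    KIz c z x y = ∑ t : Finset κ, (-z) ^ #tᶜ *
      ∏ i ∈ t, (∏ a, fC c (x a) (y i)) * ∏ j ∈ tᶜ, fC c (y i) (y j) := by
  let r : κ → ℂ := fun j => (∏ a, fC c (x a) (y j)) * ∏ i ∈ univ.erase j, fC c (y j) (y i)
  let H : Matrix κ κ ℂ := of fun j k => (hC c (y j) (y k))⁻¹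
  have hKIz : KIz c z x y = (of (fun j k => r j * H j k) + (-z) • 1).det := by
    rw [KIz]
    congr 1
    ext j k
    by_cases hjk : j = k <;> simp [r, H, hjk, div_eq_mul_inv, add_comm]
  rw [hKIz, det_add_smul_one_eq_sum_minors]
  refine sum_congr rfl fun t _ => congrArg _ ?_
  have hminor : ((of fun j k => r j * H j k).submatrix (↑) (↑) : Matrix t t ℂ) =
      of fun j k : t => r j * (H.submatrix (↑) (↑) : Matrix t t ℂ) j k := rfl
  rw [hminor, det_mul_column, det_submatrix_inv_hC hc, prod_coe_sort t r, ← prod_mul_distrib]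
  refine prod_congr rfl fun i hi => ?_
  have hsplit : univ.erase i = t.erase i ∪ tᶜ := by grind [mem_compl]
  have hdisj : Disjoint (t.erase i) tᶜ := disjoint_compl_right.mono_left (erase_subset i t)
  have hne : ∏ j ∈ t.erase i, fC c (y i) (y j) ≠ 0 := prod_ne_zero_iff.2 fun j hj =>
    fC_ne_zero (hy.ne (ne_of_mem_erase hj).symm) (hc i j)
  simp only [r, hsplit, prod_union hdisj, prod_inv_distrib]
  field_simp

theorem KIz_restr_add_eq_sum {p : ℕ} (c z : ℂ) {w : Fin p → ℂ} (hw : Function.Injective w)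
    (hc : ∀ i j, w i - w j + c ≠ 0) (U s : Finset (Fin p)) :
    KIz c z (restr w U) (fun i => restr w s i + c) =
      ∑ t ∈ s.powerset, (-z) ^ #(s \ t) * ((fSS c w t U)⁻¹ * fSS c w t (s \ t)) := by
  have hy : Function.Injective fun i => restr w s i + c :=
    (add_left_injective c).comp (hw.comp Subtype.val_injective)
  rw [KIz_eq_sum c z _ hy fun i j => by simpa [restr] using hc i j]
  refine sum_bij' (fun t _ => t.map (Function.Embedding.subtype _)) (fun t _ => t.subtype _)
    (fun t _ => mem_powerset.2 (map_subtype_subset t)) (fun _ _ => mem_univ _)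
    (fun t _ => by ext; simp) (fun t ht => subtype_map_of_mem (mem_powerset.1 ht)) fun t _ => ?_
  have hcompl : s \ t.map (Function.Embedding.subtype _) =
      tᶜ.map (Function.Embedding.subtype _) := by
    ext i
    simp only [mem_sdiff, mem_map, mem_compl, Function.Embedding.subtype_apply,
      Subtype.exists]
    grind
  have hU : ∀ i : s, ∏ a, fC c (restr w U a) (restr w s i + c) =
      (∏ a ∈ U, fC c (w i) (w a))⁻¹ := fun i => by
    simp only [fC_add_right, prod_inv_distrib, restr]
    rw [prod_coe_sort U fun a => fC c (w i) (w a)]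
  simp only [hcompl, fSS, prod_map, card_map, hU, fC_add_add, prod_mul_distrib, prod_inv_distrib]
  rfl

theorem KIz_restr_map {p q : ℕ} {κ : Type*} [Fintype κ] [DecidableEq κ] (c z : ℂ)
    (w : Fin p → ℂ) (e : Fin q ↪ Fin p) (y : κ → ℂ) :
    KIz c z (restr w (univ.map e)) y = KIz c z (w ∘ e) y := by
  have hprod (b : ℂ) : ∏ a, fC c (restr w (univ.map e) a) b = ∏ i, fC c ((w ∘ e) i) b := by
    simp only [restr, prod_coe_sort (univ.map e) fun a => fC c (w a) b, prod_map,
      Function.comp_apply]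
  simp only [KIz, hprod]

end IzerginDeterminant

section OperatorProducts

open Finset

variable {V : Type*} [AddCommGroup V] [Module ℂ V] {p : ℕ} {A : ℂ → Module.End ℂ V}

theorem opProd_empty (A : ℂ → Module.End ℂ V) (w : Fin p → ℂ) : opProd A w ∅ = 1 := by
  simp [opProd]

theorem opProd_eq_noncommProd (hA : ∀ x y, Commute (A x) (A y)) (w : Fin p → ℂ)
    (s : Finset (Fin p)) :
    opProd A w s = s.noncommProd (fun i => A (w i)) fun _ _ _ _ _ => hA _ _ := by
  have hlist : s.val.map (fun i => A (w i)) = ((s.sort (· ≤ ·)).map fun i => A (w i) : List _) := by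
    rw [← Multiset.map_coe, sort_eq]
  simp only [opProd, noncommProd, hlist, Multiset.noncommProd_coe]

theorem opProd_insert (hA : ∀ x y, Commute (A x) (A y)) (w : Fin p → ℂ) {a : Fin p}
    {s : Finset (Fin p)} (ha : a ∉ s) : opProd A w (insert a s) = A (w a) * opProd A w s := by
  rw [opProd_eq_noncommProd hA, opProd_eq_noncommProd hA]
  exact noncommProd_insert_of_notMem _ _ _ _ ha

theorem opProd_insert_apply (hA : ∀ x y, Commute (A x) (A y)) (w : Fin p → ℂ) {a : Fin p}
    {s : Finset (Fin p)} (ha : a ∉ s) (ψ : V) :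
    opProd A w (insert a s) ψ = A (w a) (opProd A w s ψ) := by
  rw [opProd_insert hA w ha, Module.End.mul_apply]

theorem opProd_union (hA : ∀ x y, Commute (A x) (A y)) (w : Fin p → ℂ) {s t : Finset (Fin p)}
    (h : Disjoint s t) : opProd A w (s ∪ t) = opProd A w s * opProd A w t := by
  simp only [opProd_eq_noncommProd hA]
  exact noncommProd_union_of_disjoint h _ _

theorem opProd_map (hA : ∀ x y, Commute (A x) (A y)) {q : ℕ} (e : Fin q ↪ Fin p)
    (w : Fin p → ℂ) (s : Finset (Fin q)) : opProd A w (s.map e) = opProd A (w ∘ e) s := by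
  induction s using Finset.induction_on with
  | empty => simp only [map_empty, opProd_empty]
  | insert a s ha ih =>
    rw [map_insert, opProd_insert hA w (by simpa using ha), opProd_insert hA _ ha, ih]
    rfl

theorem opProd_smul (hA : ∀ x y, Commute (A x) (A y)) (β : ℂ) (w : Fin p → ℂ)
    (s : Finset (Fin p)) : opProd (β • A) w s = β ^ #s • opProd A w s := by
  have hβA (x y : ℂ) : Commute ((β • A) x) ((β • A) y) := ((hA x y).smul_left β).smul_right β
  induction s using Finset.induction_on with
  | empty => simp [opProd_empty]
  | insert a s ha ih =>
    rw [opProd_insert hβA w ha, opProd_insert hA w ha, ih, card_insert_of_notMem ha, Pi.smul_apply,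
      smul_mul_smul_comm, pow_succ']

end OperatorProducts

section ExchangeRelation

open Finset

variable {V : Type*} [AddCommGroup V] [Module ℂ V] {c : ℂ} {A B : ℂ → Module.End ℂ V}

/-- The exchange relation satisfied by the pairs `(ν₂₂, ν₁₂)` and `(ν₁₂, ν₂₂)` of Yangian
generators: moving `A` to the right of `B` either keeps or swaps the two spectral parameters. -/
def ExchangeRel (c : ℂ) (A B : ℂ → Module.End ℂ V) : Prop :=
  ∀ ⦃x y : ℂ⦄, x ≠ y → A x * B y = fC c x y • (B y * A x) + gC c y x • (B x * A y)

theorem exchangeRel_of_commutator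
    (h : ∀ x y : ℂ, x ≠ y → A x * B y - B y * A x = gC c x y • (B y * A x - B x * A y)) :
    ExchangeRel c A B := by
  intro x y hxy
  rw [sub_eq_iff_eq_add.1 (h x y hxy), fC_eq_one_add_gC c hxy, gC_swap c x y]
  module

-- The `2 × 2` linear system relating `A x * B y`, `A y * B x` to `B y * A x`, `B x * A y` has
-- determinant `f(x,y) f(y,x) + g(x,y)² = 1`.
theorem ExchangeRel.symm (h : ExchangeRel c A B) : ExchangeRel c B A := by
  intro x y hxy
  rw [h hxy, h hxy.symm, fC_eq_one_add_gC c hxy, fC_eq_one_add_gC c hxy.symm, gC_swap c x y]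
  module

theorem ExchangeRel.smul_right (h : ExchangeRel c A B) (β : ℂ) : ExchangeRel c A (β • B) := by
  intro x y hxy
  simp only [Pi.smul_apply, mul_smul_comm, smul_mul_assoc, h hxy]
  module

variable {vac : V} {lam : ℂ → ℂ} {p : ℕ} {w : Fin p → ℂ}

theorem gC_smul_opProd_insert_erase_insert (hB : ∀ x y, Commute (B x) (B y))
    (hw : Function.Injective w) {s : Finset (Fin p)} {a b x : Fin p} (ha : a ∉ insert b s)
    (hb : b ∉ s) (hx : x ∈ s) (ψ : V) :
    (gC c (w x) (w a) * ∏ j ∈ (insert b s).erase x, fC c (w x) (w j)) •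
        opProd B w (insert a ((insert b s).erase x)) ψ =
      fC c (w a) (w b) • (gC c (w x) (w a) * ∏ j ∈ s.erase x, fC c (w x) (w j)) •
        B (w b) (opProd B w (insert a (s.erase x)) ψ) +
      gC c (w b) (w a) • (gC c (w x) (w b) * ∏ j ∈ s.erase x, fC c (w x) (w j)) •
        B (w a) (opProd B w (insert b (s.erase x)) ψ) := by
  obtain ⟨hab, has⟩ : a ≠ b ∧ a ∉ s := by simpa using ha
  have hxa : x ≠ a := ne_of_mem_of_not_mem hx has
  have hxb : x ≠ b := ne_of_mem_of_not_mem hx hb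
  rw [erase_insert_of_ne hxb.symm, prod_insert (mt mem_of_mem_erase hb),
    ← opProd_insert_apply hB w (by grind), ← opProd_insert_apply hB w (by grind),
    insert_comm b a, ← mul_assoc, gC_mul_fC_left c (hw.ne hxa) (hw.ne hxb) (hw.ne hab)]
  module

theorem ExchangeRel.apply_opProd (h : ExchangeRel c A B) (hB : ∀ x y, Commute (B x) (B y))
    (hvac : ∀ x, A x vac = lam x • vac + B x vac) (hw : Function.Injective w)
    {s : Finset (Fin p)} {a : Fin p} (ha : a ∉ s) :
    A (w a) (opProd B w s vac) = opProd B w (insert a s) vac +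
      (lam (w a) * ∏ j ∈ s, fC c (w a) (w j)) • opProd B w s vac +
      ∑ x ∈ s, lam (w x) • (gC c (w x) (w a) * ∏ j ∈ s.erase x, fC c (w x) (w j)) •
        opProd B w (insert a (s.erase x)) vac := by
  induction s using Finset.induction_on generalizing a with
  | empty =>
    rw [opProd_insert hB w (notMem_empty a)]
    simp [opProd_empty, hvac, add_comm]
  | insert b s hb ih =>
    obtain ⟨hab, has⟩ : a ≠ b ∧ a ∉ s := by simpa using ha
    have hexchange : A (w a) (opProd B w (insert b s) vac) =
        fC c (w a) (w b) • B (w b) (A (w a) (opProd B w s vac)) +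
          gC c (w b) (w a) • B (w a) (A (w b) (opProd B w s vac)) := by
      rw [opProd_insert_apply hB w hb]
      exact LinearMap.congr_fun (h (hw.ne hab)) (opProd B w s vac)
    have hba : b ∉ insert a s := by grind
    rw [hexchange, ih has, ih hb, sum_insert hb, erase_insert hb, prod_insert hb,
      sum_congr rfl fun x hx => congrArg (lam (w x) • ·)
        (gC_smul_opProd_insert_erase_insert hB hw ha hb hx vac)]
    simp only [map_add, map_sum, map_smul, smul_add, smul_sum, sum_add_distrib,
      ← opProd_insert_apply hB w hb, ← opProd_insert_apply hB w has,
      ← opProd_insert_apply hB w ha, ← opProd_insert_apply hB w hba, insert_comm b a,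
      fC_eq_one_add_gC c (hw.ne hab), gC_swap c (w a) (w b), smul_comm (lam _)]
    module

-- The pole terms of the single action recombine through the partial fraction expansion of
-- `f(w̄_t, w_a)` in `w_a`.
theorem sum_powerset_smul_sum_gC_smul (hw : Function.Injective w) {s : Finset (Fin p)} {a : Fin p}
    (ha : a ∉ s) (φ : Finset (Fin p) → V) :
    ∑ t ∈ s.powerset, ((∏ i ∈ t, lam (w i)) * fSS c w t (s \ t)) •
        ∑ x ∈ s \ t, lam (w x) •
          (gC c (w x) (w a) * ∏ j ∈ (s \ t).erase x, fC c (w x) (w j)) • φ ((s \ t).erase x) =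
      ∑ t ∈ s.powerset, ((∏ i ∈ t, lam (w i)) * fSS c w t (s \ t) *
        (∏ i ∈ t, fC c (w i) (w a) - 1)) • φ (s \ t) := by
  simp only [smul_sum]
  rw [sum_powerset_sum_sdiff]
  refine sum_congr rfl fun t ht => ?_
  have hts := mem_powerset.1 ht
  have hta : ∀ i ∈ t, w i ≠ w a := fun i hi => hw.ne (ne_of_mem_of_not_mem (hts hi) ha)
  rw [prod_fC_eq_one_add_sum c hw hta, add_sub_cancel_left, mul_sum, sum_smul]
  refine sum_congr rfl fun x hx => ?_
  have hst : (s \ t.erase x).erase x = s \ t := by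
    rw [sdiff_erase (hts hx), erase_insert (by simp [hx])]
  rw [hst, smul_smul, smul_smul, ← mul_prod_erase t (fun i => lam (w i)) hx]
  congr 1
  linear_combination (gC c (w x) (w a) * lam (w x) * ∏ i ∈ t.erase x, lam (w i)) *
    fSS_erase_mul_prod c w hts hx

theorem ExchangeRel.opProd_apply_vac (h : ExchangeRel c A B) (hA : ∀ x y, Commute (A x) (A y))
    (hB : ∀ x y, Commute (B x) (B y)) (hvac : ∀ x, A x vac = lam x • vac + B x vac)
    (hw : Function.Injective w) (s : Finset (Fin p)) :
    opProd A w s vac = ∑ t ∈ s.powerset,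
      ((∏ i ∈ t, lam (w i)) * fSS c w t (s \ t)) • opProd B w (s \ t) vac := by
  induction s using Finset.induction_on with
  | empty => simp [fSS, opProd_empty]
  | insert a s ha ih =>
    have haction (t : Finset (Fin p)) :=
      h.apply_opProd hB hvac hw (notMem_mono (sdiff_subset (t := t)) ha)
    rw [opProd_insert_apply hA w ha, ih, map_sum, sum_powerset_insert ha]
    simp only [map_smul, haction, smul_add, sum_add_distrib]
    rw [sum_powerset_smul_sum_gC_smul hw ha fun t => opProd B w (insert a t) vac, add_right_comm,
      ← sum_add_distrib]
    refine congrArg₂ _ (sum_congr rfl fun t ht => ?_) (sum_congr rfl fun t ht => ?_)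
    · have hat : a ∉ t := fun hat => ha (mem_powerset.1 ht hat)
      rw [insert_sdiff_of_notMem s hat, fSS_insert_right c w t (by simp [ha])]
      module
    · have hat : a ∉ t := fun hat => ha (mem_powerset.1 ht hat)
      rw [insert_sdiff_insert, sdiff_insert_of_notMem ha, fSS_insert_left c w hat, prod_insert hat]
      module

-- The sum runs over all `t`: those that meet `U` contribute `0` because `fSS c w t U = 0`.
theorem ExchangeRel.opProd_mul_opProd_compl_apply_vac_eq_sum_left (h : ExchangeRel c A B)
    (hA : ∀ x y, Commute (A x) (A y)) (hB : ∀ x y, Commute (B x) (B y))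
    (hvac : ∀ x, A x vac = lam x • vac + B x vac) (hw : Function.Injective w)
    (hc : ∀ i j, w i - w j + c ≠ 0) (U : Finset (Fin p)) :
    (opProd A w U * opProd B w Uᶜ) vac = ∑ t,
      ((∏ i ∈ t, -lam (w i)) * (fSS c w t tᶜ * (fSS c w t U)⁻¹)) • opProd A w tᶜ vac := by
  have hvac' (x : ℂ) : B x vac = -lam x • vac + A x vac := by rw [hvac x]; module
  rw [Module.End.mul_apply, h.symm.opProd_apply_vac hB hA hvac' hw, map_sum]
  simp only [map_smul]
  refine sum_subset_zero_on_sdiff (subset_univ _) (fun t ht => ?_) fun t ht => ?_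
  · have htU : ¬Disjoint t U := by simpa [subset_compl_iff_disjoint_right] using ht
    rw [fSS_eq_zero c w htU, inv_zero, mul_zero, mul_zero, zero_smul]
  · have htU : Disjoint t U := subset_compl_iff_disjoint_right.1 (mem_powerset.1 ht)
    have hUt : Disjoint U (Uᶜ \ t) := disjoint_compl_right.mono_right sdiff_subset
    have hcompl : tᶜ = U ∪ (Uᶜ \ t) := by grind [mem_compl, disjoint_left]
    have hne := fSS_ne_zero hw hc htU
    rw [hcompl, opProd_union hA w hUt, fSS_union_right c w t hUt, Module.End.mul_apply]
    congr 2
    field_simp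

theorem ExchangeRel.opProd_mul_opProd_compl_apply_vac_eq_sum (h : ExchangeRel c A B)
    (hA : ∀ x y, Commute (A x) (A y)) (hB : ∀ x y, Commute (B x) (B y))
    (hvac : ∀ x, A x vac = lam x • vac + B x vac) (hw : Function.Injective w)
    (hc : ∀ i j, w i - w j + c ≠ 0) (U : Finset (Fin p)) :
    (opProd A w U * opProd B w Uᶜ) vac = ∑ s,
      ((-1) ^ #s * (∏ i ∈ s, lam (w i)) *
        KIz c 1 (restr w U) (fun i => restr w s i + c) * fSS c w s sᶜ) • opProd B w sᶜ vac := by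
  rw [h.opProd_mul_opProd_compl_apply_vac_eq_sum_left hA hB hvac hw hc]
  simp only [h.opProd_apply_vac hA hB hvac hw, smul_sum]
  rw [sum_sum_powerset_compl]
  refine sum_congr rfl fun s _ => ?_
  rw [KIz_restr_add_eq_sum c 1 hw hc, mul_sum, sum_mul, sum_smul]
  refine sum_congr rfl fun t ht => ?_
  have hts := mem_powerset.1 ht
  have hcompl : tᶜ \ (s \ t) = sᶜ := by grind [mem_compl]
  have hsign : (-1 : ℂ) ^ #t = (-1) ^ #s * (-1) ^ #(s \ t) := by
    rw [← card_sdiff_add_card_eq_card hts, pow_add, mul_right_comm, ← mul_pow]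
    simp
  rw [hcompl, smul_smul, prod_neg, hsign, ← prod_sdiff hts]
  congr 1
  linear_combination (-1) ^ #s * (-1) ^ #(s \ t) * (∏ i ∈ t, lam (w i)) *
    (∏ i ∈ s \ t, lam (w i)) * (fSS c w t U)⁻¹ * fSS_compl_mul_fSS_sdiff c w hts

theorem ExchangeRel.opProd_mul_opProd_compl_apply_vac_eq_smul_sum {β : ℂ} (hβ : β ≠ 0)
    (h : ExchangeRel c A B) (hA : ∀ x y, Commute (A x) (A y)) (hB : ∀ x y, Commute (B x) (B y))
    (hvac : ∀ x, A x vac = lam x • vac + β • B x vac) (hw : Function.Injective w)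
    (hc : ∀ i j, w i - w j + c ≠ 0) (U : Finset (Fin p)) :
    (opProd A w U * opProd B w Uᶜ) vac = β ^ #U • ∑ s,
      ((-β) ^ (-(#s : ℤ)) * (∏ i ∈ s, lam (w i)) *
        KIz c 1 (restr w U) (fun i => restr w s i + c) * fSS c w s sᶜ) • opProd B w sᶜ vac := by
  have hβB (x y : ℂ) : Commute ((β • B) x) ((β • B) y) := ((hB x y).smul_left β).smul_right β
  have haction :=
    (h.smul_right β).opProd_mul_opProd_compl_apply_vac_eq_sum hA hβB hvac hw hc U
  simp only [opProd_smul hB, mul_smul_comm, LinearMap.smul_apply] at haction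
  have hpow (s : Finset (Fin p)) : β ^ #sᶜ = β ^ p * (β ^ #s)⁻¹ := by
    rw [eq_mul_inv_iff_mul_eq₀ (pow_ne_zero _ hβ), ← pow_add, card_compl_add_card, Fintype.card_fin]
  have hsign (s : Finset (Fin p)) : (-β) ^ (-(#s : ℤ)) = (-1) ^ #s * (β ^ #s)⁻¹ := by
    rw [zpow_neg, zpow_natCast, neg_pow, mul_inv, ← inv_pow]
    norm_num
  refine smul_right_injective V (pow_ne_zero #Uᶜ hβ) ?_
  simp only [smul_smul]
  rw [haction, ← pow_add, card_compl_add_card, Fintype.card_fin, smul_sum]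
  refine sum_congr rfl fun s _ => ?_
  rw [smul_smul, smul_smul, hpow, hsign]
  congr 1
  ring

end ExchangeRelation

theorem Generic.injective {c : ℂ} {ι : Type*} {w : ι → ℂ} (h : Generic c w) :
    Function.Injective w := fun i j hij =>
  by_contra fun hne => (h i j hne).1 (sub_eq_zero.2 hij)

theorem Generic.sub_add_ne_zero {c : ℂ} {ι : Type*} {w : ι → ℂ} (h : Generic c w) (hc : c ≠ 0)
    (i j : ι) : w i - w j + c ≠ 0 := by
  obtain rfl | hij := eq_or_ne i j
  · simpa using hc
  · exact fun h0 => (h i j hij).2.2.1 (eq_neg_of_add_eq_zero_left h0)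

theorem stmt3_general {c β : ℂ} (hβ : β ≠ 0) {V : Type*} [AddCommGroup V] [Module ℂ V]
    {B D : ℂ → Module.End ℂ V} (hB : ∀ x y, Commute (B x) (B y))
    (hD : ∀ x y, Commute (D x) (D y)) (hDB : ExchangeRel c D B) {vac : V} {lam : ℂ → ℂ}
    (hvac : ∀ x, D x vac = lam x • vac + β • B x vac) {n m : ℕ} (u : Fin n → ℂ) (v : Fin m → ℂ)
    (hinj : Function.Injective (Fin.append u v))
    (hc : ∀ i j, Fin.append u v i - Fin.append u v j + c ≠ 0) :
    (opProd D u Finset.univ * opProd B v Finset.univ) vac =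
      β ^ n • ∑ s : Finset (Fin (n + m)),
        ((-β) ^ (-(s.card : ℤ)) * (∏ i ∈ s, lam (Fin.append u v i)) *
          KIz c 1 u (fun i => restr (Fin.append u v) s i + c) *
          fSS c (Fin.append u v) s sᶜ) • opProd B (Fin.append u v) sᶜ vac := by
  have hu : Fin.append u v ∘ Fin.castAddEmb m = u := funext fun i => Fin.append_left u v i
  have hv : Fin.append u v ∘ Fin.natAddEmb n = v := funext fun j => Fin.append_right u v j
  have hcompl : (Finset.univ.map (Fin.castAddEmb m : Fin n ↪ Fin (n + m)))ᶜ =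
      Finset.univ.map (Fin.natAddEmb n) := by
    ext i
    induction i using Fin.addCases <;> simp [Fin.ext_iff] <;> grind
  have haction := hDB.opProd_mul_opProd_compl_apply_vac_eq_smul_sum hβ hD hB hvac hinj hc
    (Finset.univ.map (Fin.castAddEmb m))
  simpa only [hcompl, opProd_map hD, opProd_map hB, KIz_restr_map, hu, hv, Finset.card_map,
    Finset.card_univ, Fintype.card_fin] using haction

/-- Multiple action of the modified diagonal operator `ν₂₂` on a modified Bethe vector. -/
theorem stmt3
    (c : ℂ) (hc : c ≠ 0) (β1 β2 : ℂ) (hβ1 : β1 ≠ 0) (hβ2 : β2 ≠ 0)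
    (V : Type*) [AddCommGroup V] [Module ℂ V]
    (N : Fin 2 → Fin 2 → ℂ → Module.End ℂ V)
    (vac : V) (lam1 lam2 : ℂ → ℂ)
    (hYang : ∀ (i j k l : Fin 2) (x y : ℂ), x ≠ y →
      N i j x * N k l y - N k l y * N i j x
        = gC c x y • (N k j y * N i l x - N k j x * N i l y))
    (hCommSame : ∀ (i j : Fin 2) (x y : ℂ), N i j x * N i j y = N i j y * N i j x)
    (hvac11 : ∀ x : ℂ, N 0 0 x vac = lam1 x • vac + β2 • (N 0 1 x vac))
    (hvac22 : ∀ x : ℂ, N 1 1 x vac = lam2 x • vac + β1 • (N 0 1 x vac))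
    (hvac21 : ∀ x : ℂ, N 1 0 x vac
      = (β1 * lam1 x + β2 * lam2 x) • vac + (β1 * β2) • (N 0 1 x vac))
    (n m : ℕ) (u : Fin n → ℂ) (v : Fin m → ℂ)
    (hgen : Generic c (Fin.append u v)) :
    (opProd (N 1 1) u Finset.univ * opProd (N 0 1) v Finset.univ) vac
      = β1 ^ n • ∑ s : Finset (Fin (n + m)),
          ((-β1) ^ (-(s.card : ℤ)) *
              (∏ i ∈ s, lam2 (Fin.append u v i)) *
              KIz c 1 u (fun i => restr (Fin.append u v) s i + c) *
              fSS c (Fin.append u v) s sᶜ) •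
            (opProd (N 0 1) (Fin.append u v) sᶜ vac) :=
  stmt3_general hβ1 (hCommSame 0 1) (hCommSame 1 1)
    (exchangeRel_of_commutator fun x y => hYang 1 1 0 1 x y) hvac22 u v hgen.injective
    (hgen.sub_add_ne_zero hc)
end
end

section
/- For all n, m ≥ 0 and generic tuples ū=(u_1,…,u_n), v̄=(v_1,…,v_m), the scalar product of modified Bethe vectors satisfies S_ν^{n,m}(ū, v̄) := ⟨0|( ν_{21}(ū) ν_{12}(v̄) |0⟩ ) = Σ_{ξ̄ ⇒ {ξ̄_I, ξ̄_II}} (−β_1)^{n−l_I}(−β_2)^{n−l_II} λ_2(ξ̄_I)·λ_1(ξ̄_II)·f(ξ̄_I, ξ̄_II)·K^{(μ)}_{n,l_I}(ū | ξ̄_I + c)·\bar{K}^{(μ)}_{n,l_II}(ū | ξ̄_II − c), where ξ̄ = {ū, v̄}, the sum runs over all partitions of ξ̄ into two disjoint subtuples with no restriction on cardinalities, l_I = #ξ̄_I, and l_II = #ξ̄_II. -/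
open scoped BigOperators

noncomputable section

/-!
Write `ν_21 = T_21 + β_1 T_11 + β_2 T_22 + β_1 β_2 T_12`, where the bare monodromy matrix `T`
arises from `ν` by multiplication with constant triangular matrices, so that it satisfies the same
Yangian relations and has `|0⟩` as a highest-weight vector, while `T_12 = ν_12`. Regard the Bethe
vectors `ν_12(x̄_S)|0⟩` as a function of the subtuple `x̄_S`. On this function `T_22(x_a)` and
`T_11(x_a)` act by sums over one entry removed from `{x_a, x̄_S}`, and `T_21(x_a)` by the
composite of the two sums. Hence `ν_21(x_a)` acts as `β_1 β_2 (1 - P)(1 - Q)`, with one factor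
for `λ_2` and one for `λ_1`.

The vacuum average is a convolution, weighted by `f`, of two functions of subtuples: the products
of modified Izergin determinants and values of `λ_1`, `λ_2` for empty `ū`. By the same weighting,
`P` and `Q` each act on one factor of a convolution only. Expanding the determinants over
partitions shows that either of `1 - P`, `1 - Q` adjoins the parameter `x_a` to `ū`; so each
operator `ν_21(u_a)` adjoins `u_a` to both determinants, and the formula follows by induction on
`n`.
-/

namespace Bethe

open Finset

variable {ι : Type*}

section RationalFunctions

lemma fC_neg (c u v : ℂ) : fC (-c) u v = fC c v u := by
  unfold fC
  rw [← neg_div_neg_eq]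
  congr 1 <;> ring

lemma gC_neg (c u v : ℂ) : gC (-c) u v = gC c v u := by
  unfold gC
  rw [← neg_div_neg_eq, neg_neg, neg_sub]

lemma gC_swap (c u v : ℂ) : gC c u v = -gC c v u := by
  unfold gC
  rw [← div_neg, neg_sub]

lemma fC_eq_one_add_gC (c : ℂ) {u v : ℂ} (h : u ≠ v) : fC c u v = 1 + gC c u v := by
  have := sub_ne_zero.2 h
  unfold fC gC
  field_simp

lemma inv_fC (c u v : ℂ) : (fC c u v)⁻¹ = (u - v) / (u - v + c) := inv_div _ _

-- `1 / f(u, u)` is `0` both in the paper and here, where `f(u, u) = c / 0 = 0`.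
lemma inv_fC_self (c u : ℂ) : (fC c u u)⁻¹ = 0 := by
  simp [inv_fC]

lemma fC_add_right (c u v : ℂ) : fC c u (v + c) = (fC c v u)⁻¹ := by
  rw [inv_fC, fC, ← neg_div_neg_eq]
  congr 1 <;> ring

lemma fC_sub_left (c u v : ℂ) : fC c (u - c) v = (fC c v u)⁻¹ := by
  rw [← fC_add_right]
  unfold fC
  congr 1 <;> ring

lemma gC_sub_left (c u v : ℂ) : gC c (u - c) v = -(hC c v u)⁻¹ := by
  rw [gC_swap, gC, hC, inv_div]
  congr 2
  ring

lemma gC_mul_gC (c : ℂ) {u v w : ℂ} (huv : u ≠ v) (huw : u ≠ w) (hvw : v ≠ w) :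
    gC c u v * gC c u w = gC c u w * gC c w v + gC c u v * gC c v w := by
  have := sub_ne_zero.2 huv
  have := sub_ne_zero.2 huw
  have := sub_ne_zero.2 hvw
  rw [gC_swap c w v]
  unfold gC
  field_simp
  ring

lemma injective_of_generic {c : ℂ} {x : ι → ℂ} (hx : Generic c x) : Function.Injective x := by
  intro i j hij
  by_contra h
  exact (hx i j h).1 (sub_eq_zero.2 hij)

/-- The tuples `x̄` for which no two entries coincide and no `h(x_i, x_j)` vanishes; the diagonal
case `i = j` forces `c ≠ 0`. Unlike `Generic`, this allows differences `±2c`. -/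
structure Regular (c : ℂ) (x : ι → ℂ) : Prop where
  injective : Function.Injective x
  sub_add_ne_zero : ∀ i j, x i - x j + c ≠ 0

namespace Regular

variable {c : ℂ} {x : ι → ℂ}

lemma of_generic (hc : c ≠ 0) (hx : Generic c x) : Regular c x where
  injective := injective_of_generic hx
  sub_add_ne_zero i j h := by
    rcases eq_or_ne i j with rfl | hij
    · exact hc (by simpa using h)
    · exact (hx i j hij).2.2.1 (eq_neg_of_add_eq_zero_left h)

lemma neg (hx : Regular c x) : Regular (-c) x where
  injective := hx.injective
  sub_add_ne_zero i j h := hx.sub_add_ne_zero j i (by linear_combination -h)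

lemma comp {κ : Type*} {e : κ → ι} (hx : Regular c x) (he : Function.Injective e) :
    Regular c (x ∘ e) where
  injective := hx.injective.comp he
  sub_add_ne_zero i j := hx.sub_add_ne_zero (e i) (e j)

lemma ne_zero (hx : Regular c x) (i : ι) : c ≠ 0 := by
  simpa using hx.sub_add_ne_zero i i

lemma sub_ne_zero (hx : Regular c x) {i j : ι} (hij : i ≠ j) : x i - x j ≠ 0 :=
  _root_.sub_ne_zero.2 (hx.injective.ne hij)

lemma fC_ne_zero (hx : Regular c x) {i j : ι} (hij : i ≠ j) : fC c (x i) (x j) ≠ 0 :=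
  div_ne_zero (hx.sub_add_ne_zero i j) (hx.sub_ne_zero hij)

end Regular

variable [DecidableEq ι]

theorem prod_fC_eq_one_add_sum (c : ℂ) {x : ι → ℂ} (hx : Function.Injective x) (X : Finset ι)
    (y : ℂ) (hy : ∀ j ∈ X, y ≠ x j) :
    ∏ j ∈ X, fC c y (x j)
      = 1 + ∑ j ∈ X, gC c y (x j) * ∏ k ∈ X.erase j, fC c (x j) (x k) := by
  induction X using Finset.induction_on generalizing y with
  | empty => simp
  | insert b S hb ih =>
    have hSb : ∀ j ∈ S, j ≠ b := fun j hj => ne_of_mem_of_not_mem hj hb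
    have hyb : y ≠ x b := hy b (mem_insert_self _ _)
    have hyS : ∀ j ∈ S, y ≠ x j := fun j hj => hy j (mem_insert_of_mem hj)
    have hterm : ∀ j ∈ S, gC c y (x j) * ∏ k ∈ (insert b S).erase j, fC c (x j) (x k)
        = fC c y (x b) * (gC c y (x j) * ∏ k ∈ S.erase j, fC c (x j) (x k))
          - gC c y (x b) * (gC c (x b) (x j) * ∏ k ∈ S.erase j, fC c (x j) (x k)) := by
      intro j hj
      have hjb := hx.ne (hSb j hj)
      rw [erase_insert_of_ne (hSb j hj).symm, prod_insert (by simp [hb]),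
        fC_eq_one_add_gC c hjb, fC_eq_one_add_gC c hyb]
      linear_combination
        -(∏ k ∈ S.erase j, fC c (x j) (x k)) * gC_mul_gC c (hyS j hj) hyb hjb
    rw [prod_insert hb, sum_insert hb, erase_insert hb, sum_congr rfl hterm, sum_sub_distrib,
      ← mul_sum, ← mul_sum, ih y hyS, ih (x b) fun j hj => hx.ne (hSb j hj).symm,
      fC_eq_one_add_gC c hyb]
    ring

theorem sum_prod_fC_erase (c : ℂ) {x : ι → ℂ} (hx : Function.Injective x) (X : Finset ι) :
    ∑ j ∈ X, ∏ k ∈ X.erase j, fC c (x j) (x k) = #X := by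
  induction X using Finset.induction_on with
  | empty => simp
  | insert b S hb ih =>
    have hSb : ∀ j ∈ S, j ≠ b := fun j hj => ne_of_mem_of_not_mem hj hb
    have hterm : ∀ j ∈ S, ∏ k ∈ (insert b S).erase j, fC c (x j) (x k)
        = (∏ k ∈ S.erase j, fC c (x j) (x k))
          - gC c (x b) (x j) * ∏ k ∈ S.erase j, fC c (x j) (x k) := by
      intro j hj
      rw [erase_insert_of_ne (hSb j hj).symm, prod_insert (by simp [hb]),
        fC_eq_one_add_gC c (hx.ne (hSb j hj)), gC_swap]
      ring
    rw [sum_insert hb, erase_insert hb, sum_congr rfl hterm, sum_sub_distrib, ih,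
      prod_fC_eq_one_add_sum c hx S (x b) fun j hj => hx.ne (hSb j hj).symm,
      card_insert_of_notMem hb]
    push_cast
    ring

end RationalFunctions

section SetFunctions

variable [DecidableEq ι] {W W' : Type*} [AddCommGroup W] [Module ℂ W]
  [AddCommGroup W'] [Module ℂ W']

/-- The operator on functions of a subtuple that removes one entry `x_j`, with amplitude
`q_j f(x_j, x̄_j)`. Both the action of the monodromy entries on Bethe vectors and the recursion for
Izergin determinants are of this form. It is bundled as a linear map in the amplitude `q` too. -/
def peel (c : ℂ) (x : ι → ℂ) : (ι → ℂ) →ₗ[ℂ] Module.End ℂ (Finset ι → W) :=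
  LinearMap.mk₂ ℂ
    (fun q G X => ∑ j ∈ X, (q j * ∏ k ∈ X.erase j, fC c (x j) (x k)) • G (X.erase j))
    (fun _ _ _ => by ext; simp only [Pi.add_apply, add_mul, add_smul, sum_add_distrib])
    (fun _ _ _ => by ext; simp only [Pi.smul_apply, smul_eq_mul, mul_assoc, mul_smul, smul_sum])
    (fun _ _ _ => by ext; simp only [Pi.add_apply, smul_add, sum_add_distrib])
    (fun _ _ _ => by
      ext; simp only [Pi.smul_apply, smul_sum]; exact sum_congr rfl fun _ _ => smul_comm _ _ _)

lemma peel_apply (c : ℂ) (x q : ι → ℂ) (G : Finset ι → W) (X : Finset ι) :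
    peel c x q G X = ∑ j ∈ X, (q j * ∏ k ∈ X.erase j, fC c (x j) (x k)) • G (X.erase j) :=
  rfl

lemma map_peel (L : W →ₗ[ℂ] W') (c : ℂ) (x q : ι → ℂ) (G : Finset ι → W) (X : Finset ι) :
    L (peel c x q G X) = peel c x q (fun T => L (G T)) X := by
  simp only [peel_apply, map_sum, map_smul]

-- The amplitude acquires the factor `1 / f(x_j, x_u)`, which vanishes at `j = u`: enlarging the
-- tuple by `ū` therefore produces no terms in which an entry of `ū` is removed.
theorem peel_union {c : ℂ} {x : ι → ℂ} (hx : Regular c x) (q : ι → ℂ) {U Y : Finset ι}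
    (hUY : Disjoint U Y) {G H : Finset ι → W} (hGH : ∀ T ⊆ Y, G T = H (U ∪ T)) :
    peel c x q G Y = peel c x (fun j => q j * ∏ u ∈ U, (fC c (x j) (x u))⁻¹) H (U ∪ Y) := by
  have hzero : ∀ j ∈ U, ∏ u ∈ U, (fC c (x j) (x u))⁻¹ = 0 := fun j hj =>
    prod_eq_zero hj (inv_fC_self c (x j))
  rw [peel_apply, peel_apply, sum_union hUY]
  refine (zero_add _).symm.trans (congrArg₂ (· + ·) (sum_eq_zero fun j hj => ?_).symm
    (sum_congr rfl fun j hj => ?_))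
  · rw [hzero j hj, mul_zero, zero_mul, zero_smul]
  · have hjU : j ∉ U := disjoint_right.1 hUY hj
    have herase : (U ∪ Y).erase j = U ∪ Y.erase j := by
      rw [erase_union_distrib, erase_eq_of_notMem hjU]
    have hcancel : (∏ u ∈ U, (fC c (x j) (x u))⁻¹) * ∏ u ∈ U, fC c (x j) (x u) = 1 := by
      rw [← prod_mul_distrib]
      exact prod_eq_one fun u hu =>
        inv_mul_cancel₀ (hx.fC_ne_zero (ne_of_mem_of_not_mem hu hjU).symm)
    rw [herase, prod_union (hUY.mono_right (erase_subset _ _)), hGH _ (erase_subset _ _)]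
    congr 1
    linear_combination -(q j * ∏ k ∈ Y.erase j, fC c (x j) (x k)) * hcancel

theorem peel_insert {c : ℂ} {x : ι → ℂ} (hx : Regular c x) (q : ι → ℂ) {b : ι} {Y : Finset ι}
    (hb : b ∉ Y) {G H : Finset ι → W} (hGH : ∀ T ⊆ Y, G T = H (insert b T)) :
    peel c x q G Y = peel c x (fun j => q j * (fC c (x j) (x b))⁻¹) H (insert b Y) := by
  simpa only [prod_singleton, ← insert_eq] using
    peel_union hx q (disjoint_singleton_left.2 hb) hGH

lemma peel_const_pow_card (c q s : ℂ) {x : ι → ℂ} (hx : Function.Injective x) (X : Finset ι) :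
    peel c x (fun _ => q) (fun T => s ^ #T) X = #X * (q * s ^ (#X - 1)) := by
  rw [peel_apply, ← sum_prod_fC_erase c hx, sum_mul]
  refine sum_congr rfl fun j hj => ?_
  rw [card_erase_of_mem hj, smul_eq_mul]
  ring

/-- The convolution of functions of a subtuple, weighted by `f`:
`X ↦ ∑ Φ(x̄_I) Ψ(x̄_II) f(x̄_I, x̄_II)` over the partitions `X ⇒ {x̄_I, x̄_II}`. The
vacuum average, the Izergin determinants and the scalar product are all of this shape. -/
def fConv (c : ℂ) (x : ι → ℂ) :
    (Finset ι → ℂ) →ₗ[ℂ] (Finset ι → ℂ) →ₗ[ℂ] (Finset ι → ℂ) :=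
  LinearMap.mk₂ ℂ
    (fun Φ Ψ X => ∑ I ∈ X.powerset, Φ I * Ψ (X \ I) * ∏ i ∈ I, ∏ j ∈ X \ I, fC c (x i) (x j))
    (fun _ _ _ => by ext; simp only [Pi.add_apply, add_mul, sum_add_distrib])
    (fun _ _ _ => by ext; simp only [Pi.smul_apply, smul_eq_mul, mul_assoc, mul_sum])
    (fun _ _ _ => by ext; simp only [Pi.add_apply, mul_add, add_mul, sum_add_distrib])
    (fun _ _ _ => by
      ext; simp only [Pi.smul_apply, smul_eq_mul, mul_assoc, mul_sum, mul_left_comm])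

lemma fConv_apply (c : ℂ) (x : ι → ℂ) (Φ Ψ : Finset ι → ℂ) (X : Finset ι) :
    fConv c x Φ Ψ X
      = ∑ I ∈ X.powerset, Φ I * Ψ (X \ I) * ∏ i ∈ I, ∏ j ∈ X \ I, fC c (x i) (x j) :=
  rfl

lemma fConv_neg (c : ℂ) (x : ι → ℂ) (Φ Ψ : Finset ι → ℂ) :
    fConv (-c) x Φ Ψ = fConv c x Ψ Φ := by
  ext X
  refine sum_nbij' (X \ ·) (X \ ·) (by simp) (by simp) (by simp) (by simp) fun I hI => ?_
  rw [Finset.sdiff_sdiff_eq_self (mem_powerset.1 hI), mul_comm (Φ I), prod_comm]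
  simp only [fC_neg]

lemma fConv_univ {κ : Type*} [Fintype κ] [DecidableEq κ] (c : ℂ) (x : κ → ℂ)
    (Φ Ψ : Finset κ → ℂ) :
    fConv c x Φ Ψ univ = ∑ I, Φ I * Ψ Iᶜ * ∏ i ∈ I, ∏ j ∈ Iᶜ, fC c (x i) (x j) := by
  simp only [fConv_apply, powerset_univ, compl_eq_univ_sdiff]

lemma fConv_map {κ : Type*} [DecidableEq κ] (c : ℂ) (x : ι → ℂ) (e : κ ↪ ι)
    (Φ Ψ : Finset ι → ℂ) (X : Finset κ) :
    fConv c x Φ Ψ (X.map e)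
      = fConv c (x ∘ e) (fun I => Φ (I.map e)) (fun I => Ψ (I.map e)) X := by
  simp only [fConv_apply]
  refine (sum_nbij (·.map e) (by simp) (map_injective e).injOn ?_ fun I _ => ?_).symm
  · intro J hJ
    obtain ⟨I, hI, rfl⟩ := subset_map_iff.1 (mem_powerset.1 hJ)
    exact ⟨I, mem_powerset.2 hI, rfl⟩
  · simp only [← Finset.map_sdiff, prod_map, Function.comp_apply]

lemma fConv_prod_mul (c : ℂ) (x ρ : ι → ℂ) (Φ Ψ : Finset ι → ℂ) (X : Finset ι) :
    fConv c x (fun I => (∏ i ∈ I, ρ i) * Φ I) (fun I => (∏ i ∈ I, ρ i) * Ψ I) X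
      = (∏ i ∈ X, ρ i) * fConv c x Φ Ψ X := by
  rw [fConv_apply, fConv_apply, mul_sum]
  refine sum_congr rfl fun I hI => ?_
  rw [← prod_sdiff (mem_powerset.1 hI)]
  ring

theorem peel_fConv (c : ℂ) (x q : ι → ℂ) (Φ Ψ : Finset ι → ℂ) :
    peel c x q (fConv c x Φ Ψ) = fConv c x (peel c x q Φ) Ψ := by
  ext X
  simp only [peel_apply, fConv_apply, smul_eq_mul, mul_sum, sum_mul, sum_sigma']
  refine sum_bij' (fun p _ => ⟨insert p.1 p.2, p.1⟩) (fun p _ => ⟨p.2, p.1.erase p.2⟩)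
    ?_ ?_ ?_ ?_ ?_
  · rintro ⟨j, I⟩ h
    simp only [mem_sigma, mem_powerset, subset_erase] at h ⊢
    exact ⟨insert_subset h.1 h.2.1, mem_insert_self _ _⟩
  · rintro ⟨I, j⟩ h
    simp only [mem_sigma, mem_powerset] at h ⊢
    exact ⟨h.1 h.2, erase_subset_erase _ h.1⟩
  · rintro ⟨j, I⟩ h
    simp only [mem_sigma, mem_powerset, subset_erase] at h
    simp [erase_insert h.2.2]
  · rintro ⟨I, j⟩ h
    simp only [mem_sigma, mem_powerset] at h
    simp [insert_erase h.2]
  · rintro ⟨j, I⟩ h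
    simp only [mem_sigma, mem_powerset, subset_erase] at h
    obtain ⟨-, hIX, hjI⟩ := h
    have hsdiff : X.erase j \ I = X \ insert j I := by
      rw [erase_sdiff_comm, sdiff_insert]
    have hsplit : X.erase j = (X.erase j \ I) ∪ I :=
      (sdiff_union_of_subset (subset_erase.2 ⟨hIX, hjI⟩)).symm
    rw [hsplit, prod_union sdiff_disjoint, ← hsplit, hsdiff, erase_insert hjI, prod_insert hjI]
    ring

lemma peel_neg_fConv (c : ℂ) (x q : ι → ℂ) (Φ Ψ : Finset ι → ℂ) :
    peel (-c) x q (fConv c x Φ Ψ) = fConv c x Φ (peel (-c) x q Ψ) := by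
  rw [← fConv_neg, peel_fConv, fConv_neg]

-- Peeling off one entry on either side of the partition counts the entries of `X`.
theorem fConv_one_pow_card (c y : ℂ) {x : ι → ℂ} (hx : Function.Injective x) (X : Finset ι) :
    fConv c x 1 (fun I => y ^ #I) X = (1 + y) ^ #X := by
  induction hn : #X generalizing X with
  | zero => simp [card_eq_zero.1 hn, fConv_apply]
  | succ n ih =>
    set F := fConv c x 1 (fun I => y ^ #I) with hF
    have hpeel : ∀ d q : ℂ, peel d x (fun _ => q) F X = (n + 1) * (q * (1 + y) ^ n) := by
      intro d q
      have hpow := peel_const_pow_card d q (1 + y) hx X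
      rw [hn, Nat.add_sub_cancel] at hpow
      push_cast at hpow
      rw [← hpow, peel_apply, peel_apply]
      refine sum_congr rfl fun j hj => ?_
      have hcard : #(X.erase j) = n := by rw [card_erase_of_mem hj, hn, Nat.add_sub_cancel]
      rw [ih _ hcard, hcard]
    have hcount : peel c x (fun _ => 1) F X + peel (-c) x (fun _ => y) F X = (n + 1) * F X := by
      rw [hF, peel_fConv, peel_neg_fConv]
      simp only [fConv_apply]
      rw [← sum_add_distrib, mul_sum]
      refine sum_congr rfl fun I hI => ?_
      have hleft := peel_const_pow_card c 1 1 hx I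
      have hright := peel_const_pow_card (-c) y y hx (X \ I)
      have hcard : (#(X \ I) + #I : ℂ) = n + 1 := by
        exact_mod_cast (card_sdiff_add_card_eq_card (mem_powerset.1 hI)).trans hn
      have hpow : (#(X \ I) : ℂ) * (y * y ^ (#(X \ I) - 1)) = #(X \ I) * y ^ #(X \ I) := by
        rcases Nat.eq_zero_or_pos #(X \ I) with h | h
        · simp [h]
        · rw [mul_pow_sub_one h.ne']
      simp only [one_pow, mul_one] at hleft
      rw [hright, hpow, ← hcard, Pi.one_def, hleft]
      ring
    have hn0 : (n + 1 : ℂ) ≠ 0 := by exact_mod_cast n.succ_ne_zero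
    apply mul_left_cancel₀ hn0
    rw [← hcount, hpeel, hpeel]
    ring

theorem fConv_prod_mul_inv_fC {c : ℂ} {x : ι → ℂ} (hx : Regular c x) (w : ι → ℂ) (a : ι)
    (Ψ : Finset ι → ℂ) :
    fConv c x (fun I => ∏ j ∈ I, w j * (fC c (x j) (x a))⁻¹) Ψ
      = (1 - peel c x (fun j => w j / hC c (x j) (x a)) : Module.End ℂ (Finset ι → ℂ))
          (fConv c x (fun I => ∏ j ∈ I, w j) Ψ) := by
  rw [LinearMap.sub_apply, Module.End.one_apply, peel_fConv, ← LinearMap.sub_apply, ← map_sub]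
  congr 2
  ext I
  have hpf := prod_fC_eq_one_add_sum c hx.injective I (x a - c) fun j _ h =>
    hx.sub_add_ne_zero j a (by linear_combination -h)
  simp only [fC_sub_left, gC_sub_left] at hpf
  rw [prod_mul_distrib, hpf, Pi.sub_apply, peel_apply, mul_add, mul_one, mul_sum, sub_eq_add_neg,
    ← sum_neg_distrib]
  congr 1
  refine sum_congr rfl fun j hj => ?_
  rw [← mul_prod_erase I w hj, smul_eq_mul]
  ring

end SetFunctions

section Determinants

theorem det_add_diagonal {R κ : Type*} [CommRing R] [Fintype κ] [DecidableEq κ]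
    (A : Matrix κ κ R) (d : κ → R) :
    (A + Matrix.diagonal d).det
      = ∑ S, (∏ i ∈ Sᶜ, d i) * (A.submatrix (↑) (↑) : Matrix S S R).det := by
  refine (Matrix.detRowAlternating.map_add_univ A.row (Matrix.diagonal d).row).trans
    (sum_congr rfl fun S _ => ?_)
  have hrows : S.piecewise A.row (Matrix.diagonal d).row
      = fun i => S.piecewise (fun _ => 1) d i • S.piecewise A.row (1 : Matrix κ κ R).row i := by
    ext i j
    by_cases hi : i ∈ S <;> simp [hi, Matrix.diagonal_apply, Matrix.one_apply]
  rw [hrows, AlternatingMap.map_smul_univ, smul_eq_mul, prod_piecewise, univ_inter,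
    ← compl_eq_univ_sdiff, prod_const_one, one_mul, ← A.det_piecewise_one_eq_submatrix_det S]
  rfl

variable {c : ℂ} {x : ι → ℂ}

lemma inv_hC_sub_mul (hx : Regular c x) (b j k : ι) :
    (hC c (x j) (x k))⁻¹ - (hC c (x j) (x b))⁻¹ * (hC c (x b) (x k))⁻¹
      = (fC c (x j) (x b))⁻¹ * ((fC c (x b) (x k))⁻¹ * (hC c (x j) (x k))⁻¹) := by
  have := hx.sub_add_ne_zero j k
  have := hx.sub_add_ne_zero j b
  have := hx.sub_add_ne_zero b k
  simp only [inv_fC, hC, inv_div]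
  field_simp
  ring

theorem det_inv_hC [DecidableEq ι] (hx : Regular c x) (S : Finset ι) :
    Matrix.det (Matrix.of fun j k : S => (hC c (x j) (x k))⁻¹)
      = ∏ j ∈ S, ∏ k ∈ S.erase j, (fC c (x j) (x k))⁻¹ := by
  induction S using Finset.induction_on with
  | empty => simp
  | insert b S hb ih =>
    let e : S ⊕ PUnit.{1} ≃ {a // a ∈ insert b S} :=
      ((subtypeInsertEquivOption hb).trans (Equiv.optionEquivSumPUnit _)).symm
    have hbb : hC c (x b) (x b) = 1 := by simp [hC, hx.ne_zero b]
    have hblocks : (Matrix.of fun j k : {a // a ∈ insert b S} => (hC c (x j) (x k))⁻¹).submatrix e e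
        = Matrix.fromBlocks (Matrix.of fun j k : S => (hC c (x j) (x k))⁻¹)
          (Matrix.of fun (j : S) (_ : PUnit) => (hC c (x j) (x b))⁻¹)
          (Matrix.of fun (_ : PUnit) (k : S) => (hC c (x b) (x k))⁻¹) 1 := by
      ext (j | j) (k | k) <;> simp [e, subtypeInsertEquivOption, hbb]
    have hschur : (Matrix.of fun j k : S => (hC c (x j) (x k))⁻¹)
          - (Matrix.of fun (j : S) (_ : PUnit) => (hC c (x j) (x b))⁻¹)
            * (Matrix.of fun (_ : PUnit) (k : S) => (hC c (x b) (x k))⁻¹)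
        = Matrix.of fun j k : S => (fC c (x j) (x b))⁻¹ *
            Matrix.of (fun j k : S => (fC c (x b) (x k))⁻¹ *
              Matrix.of (fun j k : S => (hC c (x j) (x k))⁻¹) j k) j k := by
      ext j k
      simpa [Matrix.mul_apply] using inv_hC_sub_mul hx b j k
    have hrow : ∀ j ∈ S, ∏ k ∈ (insert b S).erase j, (fC c (x j) (x k))⁻¹
        = (fC c (x j) (x b))⁻¹ * ∏ k ∈ S.erase j, (fC c (x j) (x k))⁻¹ := fun j hj => by
      rw [erase_insert_of_ne (ne_of_mem_of_not_mem hj hb).symm, prod_insert (by simp [hb])]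
    rw [← Matrix.det_submatrix_equiv_self e, hblocks, Matrix.det_fromBlocks_one₂₂, hschur,
      Matrix.det_mul_column, Matrix.det_mul_row, ih,
      prod_coe_sort S fun j => (fC c (x j) (x b))⁻¹, prod_coe_sort S fun k => (fC c (x b) (x k))⁻¹,
      prod_insert hb, erase_insert hb, prod_congr rfl hrow, prod_mul_distrib]
    ring

theorem det_mul_prod_fC_erase_mul_inv_hC [Fintype ι] [DecidableEq ι] (hx : Regular c x)
    (w : ι → ℂ) (S : Finset ι) :
    Matrix.det (Matrix.of fun j k : S =>
        w j * (∏ i ∈ univ.erase ↑j, fC c (x j) (x i)) * (hC c (x j) (x k))⁻¹)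
      = (∏ j ∈ S, w j) * ∏ j ∈ S, ∏ k ∈ Sᶜ, fC c (x j) (x k) := by
  have hrow : ∀ j ∈ S, w j * (∏ i ∈ univ.erase j, fC c (x j) (x i))
      * ∏ k ∈ S.erase j, (fC c (x j) (x k))⁻¹ = w j * ∏ k ∈ Sᶜ, fC c (x j) (x k) := fun j hj => by
    have hdisj : Disjoint (S.erase j) Sᶜ := disjoint_compl_right.mono_left (erase_subset _ _)
    have hunion : univ.erase j = S.erase j ∪ Sᶜ := by
      rw [← union_compl S, erase_union_distrib, erase_eq_of_notMem (a := j) (s := Sᶜ) (by simpa)]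
    have hcancel : (∏ k ∈ S.erase j, fC c (x j) (x k)) * ∏ k ∈ S.erase j, (fC c (x j) (x k))⁻¹
        = 1 := by
      rw [← prod_mul_distrib]
      exact prod_eq_one fun k hk => mul_inv_cancel₀ (hx.fC_ne_zero (ne_of_mem_erase hk).symm)
    rw [hunion, prod_union hdisj]
    linear_combination w j * (∏ k ∈ Sᶜ, fC c (x j) (x k)) * hcancel
  rw [← prod_mul_distrib, ← prod_congr rfl hrow, prod_mul_distrib, ← det_inv_hC hx,
    ← prod_coe_sort S fun j => w j * ∏ i ∈ univ.erase j, fC c (x j) (x i)]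
  exact Matrix.det_mul_column _ _

theorem KIz_add_eq_fConv {α κ : Type*} [Fintype α] [Fintype κ] [DecidableEq κ] (z : ℂ)
    (u : α → ℂ) {y : κ → ℂ} (hy : Regular c y) :
    KIz c z u (fun k => y k + c)
      = fConv c y (fun S => ∏ j ∈ S, ∏ i, (fC c (y j) (u i))⁻¹) (fun S => (-z) ^ #S) univ := by
  have hfC : ∀ j k, fC c (y j + c) (y k + c) = fC c (y j) (y k) := fun _ _ => by
    simp only [fC, add_sub_add_right_eq_sub]
  have hhC : ∀ j k, hC c (y j + c) (y k + c) = hC c (y j) (y k) := fun _ _ => by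
    simp only [hC, add_sub_add_right_eq_sub]
  have hmatrix : (Matrix.of fun j k => -z * (if j = k then 1 else 0) +
        (∏ i, fC c (u i) (y j + c)) * (∏ i ∈ univ.erase j, fC c (y j + c) (y i + c))
          / hC c (y j + c) (y k + c))
      = (Matrix.of fun j k => (∏ i, (fC c (y j) (u i))⁻¹)
            * (∏ i ∈ univ.erase j, fC c (y j) (y i)) * (hC c (y j) (y k))⁻¹)
        + Matrix.diagonal fun _ => -z := by
    ext j k
    simp only [hfC, hhC, fC_add_right, div_eq_mul_inv, Matrix.add_apply, Matrix.of_apply,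
      Matrix.diagonal_apply, mul_ite, mul_one, mul_zero]
    exact add_comm _ _
  rw [KIz, hmatrix, det_add_diagonal, fConv_univ]
  refine sum_congr rfl fun S _ => ?_
  have hminor := det_mul_prod_fC_erase_mul_inv_hC hy (fun j => ∏ i, (fC c (y j) (u i))⁻¹) S
  rw [prod_const, mul_right_comm, ← hminor, mul_comm]
  rfl

end Determinants

section DressedIzergin

variable [DecidableEq ι] {W W' : Type*} [AddCommGroup W] [Module ℂ W]
  [AddCommGroup W'] [Module ℂ W']

/-- The function `I ↦ ρ(x̄_I) K^{(z)}(x̄_U | x̄_I + c)` of a subtuple, written through the expansion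
of the modified Izergin determinant over partitions; see `dressedIzergin_map_univ`. In this form
`x̄_I` is allowed to overlap with `x̄_U`. -/
def dressedIzergin (c z : ℂ) (x ρ : ι → ℂ) (U : Finset ι) : Finset ι → ℂ :=
  fConv c x (fun I => ∏ j ∈ I, ρ j * ∏ u ∈ U, (fC c (x j) (x u))⁻¹) (fun I => ∏ j ∈ I, -z * ρ j)

lemma dressedIzergin_eq_prod_mul (c z : ℂ) (x ρ : ι → ℂ) (U I : Finset ι) :
    dressedIzergin c z x ρ U I = (∏ j ∈ I, ρ j)
      * fConv c x (fun S => ∏ j ∈ S, ∏ u ∈ U, (fC c (x j) (x u))⁻¹) (fun S => (-z) ^ #S) I := by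
  rw [← fConv_prod_mul]
  simp only [dressedIzergin, prod_mul_distrib, prod_const, mul_comm]

lemma dressedIzergin_empty (c z : ℂ) {x : ι → ℂ} (hx : Function.Injective x) (ρ : ι → ℂ)
    (I : Finset ι) : dressedIzergin c z x ρ ∅ I = (∏ j ∈ I, ρ j) * (1 - z) ^ #I := by
  rw [dressedIzergin_eq_prod_mul, sub_eq_add_neg, ← fConv_one_pow_card c (-z) hx]
  simp only [prod_empty, prod_const_one, Pi.one_def]

/-- The operator that adjoins `x_a` to the first argument `x̄_U` of the modified Izergin
determinant, see `dressedIzergin_insert`. For `U = ∅` it describes the action of `ν_21(x_a)` on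
Bethe vectors. -/
def adjoin (c : ℂ) (x ρ : ι → ℂ) (U : Finset ι) (a : ι) : Module.End ℂ (Finset ι → W) :=
  1 - peel c x fun j => ρ j / hC c (x j) (x a) * ∏ u ∈ U, (fC c (x j) (x u))⁻¹

lemma adjoin_apply (c : ℂ) (x ρ : ι → ℂ) (U : Finset ι) (a : ι) (G : Finset ι → W) :
    adjoin c x ρ U a G
      = G - peel c x (fun j => ρ j / hC c (x j) (x a) * ∏ u ∈ U, (fC c (x j) (x u))⁻¹) G :=
  rfl

lemma map_adjoin (L : W →ₗ[ℂ] W') (c : ℂ) (x ρ : ι → ℂ) (U : Finset ι) (a : ι)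
    (G : Finset ι → W) (X : Finset ι) :
    L (adjoin c x ρ U a G X) = adjoin c x ρ U a (fun T => L (G T)) X := by
  simp only [adjoin_apply, Pi.sub_apply, map_sub, map_peel]

lemma adjoin_fConv (c : ℂ) (x ρ : ι → ℂ) (U : Finset ι) (a : ι) (Φ Ψ : Finset ι → ℂ) :
    adjoin c x ρ U a (fConv c x Φ Ψ) = fConv c x (adjoin c x ρ U a Φ) Ψ := by
  rw [adjoin_apply, adjoin_apply, peel_fConv, map_sub, LinearMap.sub_apply]

lemma adjoin_neg_fConv (c : ℂ) (x ρ : ι → ℂ) (U : Finset ι) (a : ι) (Φ Ψ : Finset ι → ℂ) :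
    adjoin (-c) x ρ U a (fConv c x Φ Ψ) = fConv c x Φ (adjoin (-c) x ρ U a Ψ) := by
  rw [adjoin_apply, adjoin_apply, peel_neg_fConv, map_sub]

lemma adjoin_empty_eq_adjoin_union {c : ℂ} {x : ι → ℂ} (hx : Regular c x) (ρ : ι → ℂ) (a : ι)
    {U Y : Finset ι} (hUY : Disjoint U Y) {G H : Finset ι → W}
    (hGH : ∀ T ⊆ Y, G T = H (U ∪ T)) :
    adjoin c x ρ ∅ a G Y = adjoin c x ρ U a H (U ∪ Y) := by
  simp only [adjoin_apply, Pi.sub_apply, hGH Y Subset.rfl, peel_union hx _ hUY hGH, prod_empty,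
    mul_one]

theorem dressedIzergin_insert {c : ℂ} (z : ℂ) {x : ι → ℂ} (hx : Regular c x) (ρ : ι → ℂ)
    {U : Finset ι} {a : ι} (ha : a ∉ U) :
    dressedIzergin c z x ρ (insert a U) = adjoin c x ρ U a (dressedIzergin c z x ρ U) := by
  simp only [adjoin, div_mul_eq_mul_div]
  rw [dressedIzergin, dressedIzergin, ← fConv_prod_mul_inv_fC hx]
  simp only [prod_insert ha, mul_assoc, mul_comm (fC c _ (x a))⁻¹]

theorem dressedIzergin_map_univ {α : Type*} [Fintype α] {c : ℂ} (z : ℂ) {x : ι → ℂ}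
    (hx : Regular c x) (ρ : ι → ℂ) (e : α ↪ ι) (I : Finset ι) :
    dressedIzergin c z x ρ (univ.map e) I
      = (∏ j ∈ I, ρ j) * KIz c z (x ∘ e) (fun j : I => x j + c) := by
  have hI : I = univ.map (Function.Embedding.subtype (· ∈ I)) := by
    rw [univ_eq_attach, attach_map_val]
  have hK := KIz_add_eq_fConv z (x ∘ e) (hx.comp (e := fun j : I => (j : ι)) Subtype.val_injective)
  simp only [Function.comp_apply] at hK
  rw [dressedIzergin_eq_prod_mul, hK]
  congr 1
  conv_lhs => rw [hI, fConv_map]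
  simp only [prod_map, card_map]
  rfl

end DressedIzergin

section Yangian

variable {κ 𝒜 : Type*} [Ring 𝒜] [Algebra ℂ 𝒜]

/-- The commutation relations of the Yangian `Y(gl_κ)` for a monodromy matrix `T(u)`, written
entrywise. -/
def IsYangian (c : ℂ) (T : κ → κ → ℂ → 𝒜) : Prop :=
  ∀ (i j k l : κ) (u v : ℂ), u ≠ v →
    T i j u * T k l v - T k l v * T i j u = gC c u v • (T k j v * T i l u - T k j u * T i l v)

/-- The monodromy matrix `T(u)` multiplied on the left by the constant matrix `P`. -/
def mulLeft [Fintype κ] (P : Matrix κ κ ℂ) (T : κ → κ → ℂ → 𝒜) : κ → κ → ℂ → 𝒜 :=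
  fun i j u => ∑ a, P i a • T a j u

/-- The monodromy matrix `T(u)` multiplied on the right by the constant matrix `Q`. -/
def mulRight [Fintype κ] (Q : Matrix κ κ ℂ) (T : κ → κ → ℂ → 𝒜) : κ → κ → ℂ → 𝒜 :=
  fun i j u => ∑ b, Q b j • T i b u

namespace IsYangian

variable {c : ℂ} {T : κ → κ → ℂ → 𝒜}

-- The relation for `(u, v)` reads `(1 + g(u, v)) [T(u), T(v)] = 0`, the one for `(v, u)` reads
-- `(1 - g(u, v)) [T(u), T(v)] = 0`.
lemma commute_self (hT : IsYangian c T) (i j : κ) (u v : ℂ) : Commute (T i j u) (T i j v) := by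
  rcases eq_or_ne u v with rfl | huv
  · exact Commute.refl _
  have huv' := hT i j i j u v huv
  have hvu' := hT i j i j v u huv.symm
  rw [gC_swap] at hvu'
  have hsum : (2 : ℂ) • (T i j u * T i j v - T i j v * T i j u) = 0 := by
    linear_combination (norm := module) huv' - hvu'
  exact sub_eq_zero.1 ((smul_eq_zero.1 hsum).resolve_left two_ne_zero)

lemma mulLeft [Fintype κ] (hT : IsYangian c T) (P : Matrix κ κ ℂ) :
    IsYangian c (mulLeft P T) := by
  intro i j k l u v huv
  simp only [Bethe.mulLeft, sum_mul_sum, smul_mul_smul_comm]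
  rw [sum_comm (f := fun a b => (P k a * P i b) • (T a l v * T b j u)),
    sum_comm (f := fun a b => (P k a * P i b) • (T a j v * T b l u)),
    sum_comm (f := fun a b => (P k a * P i b) • (T a j u * T b l v))]
  simp only [← sum_sub_distrib, smul_sum, mul_comm (P k _), ← smul_sub]
  refine sum_congr rfl fun a _ => sum_congr rfl fun b _ => ?_
  rw [hT a j b l u v huv, smul_comm]

lemma mulRight [Fintype κ] (hT : IsYangian c T) (Q : Matrix κ κ ℂ) :
    IsYangian c (mulRight Q T) := by
  intro i j k l u v huv
  simp only [Bethe.mulRight, sum_mul_sum, smul_mul_smul_comm]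
  rw [sum_comm (f := fun a b => (Q a l * Q b j) • (T k a v * T i b u))]
  simp only [← sum_sub_distrib, smul_sum, mul_comm (Q _ l), ← smul_sub]
  refine sum_congr rfl fun a _ => sum_congr rfl fun b _ => ?_
  rw [hT i a k b u v huv, smul_comm]

end IsYangian

/-- The `2 × 2` monodromy matrix obtained from the modified one by undoing the modification:
a triangular constant matrix on either side removes the terms in `ν_12` from the action of the
other entries on the vacuum. -/
def bareMonodromy (β1 β2 : ℂ) (N : Fin 2 → Fin 2 → ℂ → 𝒜) : Fin 2 → Fin 2 → ℂ → 𝒜 :=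
  mulRight !![1, 0; -β2, 1] (mulLeft !![1, 0; -β1, 1] N)

lemma IsYangian.bareMonodromy {c : ℂ} {N : Fin 2 → Fin 2 → ℂ → 𝒜} (hN : IsYangian c N)
    (β1 β2 : ℂ) : IsYangian c (bareMonodromy β1 β2 N) :=
  (hN.mulLeft _).mulRight _

variable (β1 β2 : ℂ) (N : Fin 2 → Fin 2 → ℂ → 𝒜) (u : ℂ)

lemma bareMonodromy_zero_zero : bareMonodromy β1 β2 N 0 0 u = N 0 0 u - β2 • N 0 1 u := by
  simp only [bareMonodromy, mulRight, Fin.isValue, Matrix.of_apply, Matrix.cons_val',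
    Matrix.cons_val_zero, Matrix.cons_val_fin_one, mulLeft, Fin.sum_univ_two, one_smul,
    Matrix.cons_val_one, zero_smul, add_zero, neg_smul]
  module

lemma bareMonodromy_zero_one : bareMonodromy β1 β2 N 0 1 u = N 0 1 u := by
  simp [bareMonodromy, mulLeft, mulRight, Fin.sum_univ_two]

lemma bareMonodromy_one_one : bareMonodromy β1 β2 N 1 1 u = N 1 1 u - β1 • N 0 1 u := by
  simp only [bareMonodromy, mulRight, Fin.isValue, Matrix.of_apply, Matrix.cons_val',
    Matrix.cons_val_one, Matrix.cons_val_fin_one, mulLeft, Fin.sum_univ_two, Matrix.cons_val_zero,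
    neg_smul, one_smul, smul_add, smul_neg, zero_smul, neg_zero, add_zero, zero_add]
  module

lemma bareMonodromy_one_zero : bareMonodromy β1 β2 N 1 0 u
    = N 1 0 u - β1 • N 0 0 u - β2 • N 1 1 u + (β1 * β2) • N 0 1 u := by
  simp only [bareMonodromy, mulRight, Fin.isValue, Matrix.of_apply, Matrix.cons_val',
    Matrix.cons_val_zero, Matrix.cons_val_fin_one, mulLeft, Matrix.cons_val_one, Fin.sum_univ_two,
    neg_smul, one_smul, smul_add, smul_neg, neg_neg]
  module

end Yangian

section OperatorProducts

variable {V : Type*} [AddCommGroup V] [Module ℂ V] {p : ℕ} {op : ℂ → Module.End ℂ V}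

lemma opProd_eq_noncommProd (hop : ∀ u v, Commute (op u) (op v)) (x : Fin p → ℂ)
    (s : Finset (Fin p)) :
    opProd op x s = s.noncommProd (fun i => op (x i)) fun _ _ _ _ _ => hop _ _ := by
  simp only [opProd]
  rw [← noncommProd_toFinset (s.sort (· ≤ ·)) (fun i => op (x i)) (fun _ _ _ _ _ => hop _ _)
    (s.sort_nodup _)]
  simp only [sort_toFinset]

lemma opProd_empty (op : ℂ → Module.End ℂ V) (x : Fin p → ℂ) : opProd op x ∅ = 1 := by
  simp [opProd]

lemma opProd_insert (hop : ∀ u v, Commute (op u) (op v)) (x : Fin p → ℂ) {s : Finset (Fin p)}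
    {a : Fin p} (ha : a ∉ s) : opProd op x (insert a s) = op (x a) * opProd op x s := by
  rw [opProd_eq_noncommProd hop, opProd_eq_noncommProd hop]
  exact noncommProd_insert_of_notMem _ _ _ _ ha

lemma opProd_insert' (hop : ∀ u v, Commute (op u) (op v)) (x : Fin p → ℂ) {s : Finset (Fin p)}
    {a : Fin p} (ha : a ∉ s) : opProd op x (insert a s) = opProd op x s * op (x a) := by
  rw [opProd_eq_noncommProd hop, opProd_eq_noncommProd hop]
  exact noncommProd_insert_of_notMem' _ _ _ _ ha

lemma opProd_map (hop : ∀ u v, Commute (op u) (op v)) {q : ℕ} (x : Fin q → ℂ) (e : Fin p ↪ Fin q)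
    (s : Finset (Fin p)) : opProd op x (s.map e) = opProd op (x ∘ e) s := by
  induction s using Finset.induction_on with
  | empty => simp only [map_empty, opProd_empty]
  | insert b s hb ih =>
    rw [map_insert, opProd_insert hop x (by simpa using hb), opProd_insert hop _ hb, ih,
      Function.comp_apply]

/-- The Bethe vectors `B(x̄_S) Ω` as a function of the subtuple `x̄_S` of a fixed tuple `x̄`. -/
def betheVector (B : ℂ → Module.End ℂ V) (x : Fin p → ℂ) (Ω : V) (S : Finset (Fin p)) : V :=
  opProd B x S Ω

lemma betheVector_empty (B : ℂ → Module.End ℂ V) (x : Fin p → ℂ) (Ω : V) :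
    betheVector B x Ω ∅ = Ω := by
  rw [betheVector, opProd_empty, Module.End.one_apply]

lemma betheVector_insert {B : ℂ → Module.End ℂ V} (hB : ∀ u v, Commute (B u) (B v))
    (x : Fin p → ℂ) (Ω : V) {S : Finset (Fin p)} {b : Fin p} (hb : b ∉ S) :
    betheVector B x Ω (insert b S) = B (x b) (betheVector B x Ω S) := by
  rw [betheVector, opProd_insert hB x hb, Module.End.mul_apply, betheVector]

end OperatorProducts

section BetheVectorAction

variable {V : Type*} [AddCommGroup V] [Module ℂ V] {p : ℕ} {c : ℂ} {x : Fin p → ℂ} {Ω : V}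

lemma gC_mul_inv_hC_add (hx : Regular c x) {a b : Fin p} (hab : a ≠ b) (j : Fin p) :
    fC c (x a) (x b) * ((hC c (x j) (x a))⁻¹ * (fC c (x j) (x b))⁻¹)
        + gC c (x b) (x a) * ((hC c (x j) (x b))⁻¹ * (fC c (x j) (x a))⁻¹)
      = (hC c (x j) (x a))⁻¹ := by
  have := hx.sub_add_ne_zero j a
  have := hx.sub_add_ne_zero j b
  have := hx.sub_ne_zero hab
  rw [gC_swap]
  simp only [hC, inv_div, fC, gC]
  field_simp
  ring

-- The summand in which `x_a` is removed is the wanted term, the others are the unwanted terms.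
theorem apply_betheVector_of_exchange (hx : Regular c x) {B D : ℂ → Module.End ℂ V} {lam : ℂ → ℂ}
    (hB : ∀ u v, Commute (B u) (B v))
    (hDB : ∀ u v, u ≠ v → D u * B v = fC c u v • (B v * D u) + gC c v u • (B u * D v))
    (hΩ : ∀ u, D u Ω = lam u • Ω) {S : Finset (Fin p)} {a : Fin p} (ha : a ∉ S) :
    D (x a) (betheVector B x Ω S)
      = peel c x (fun j => lam (x j) / hC c (x j) (x a)) (betheVector B x Ω) (insert a S) := by
  induction S using Finset.induction_on generalizing a with
  | empty => simp [betheVector_empty, peel_apply, hΩ, hC, hx.ne_zero a]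
  | insert b S hb ih =>
    obtain ⟨hab, haS⟩ : a ≠ b ∧ a ∉ S := by simpa using ha
    have hstep : ∀ {a b : Fin p}, a ≠ b → a ∉ S → b ∉ S →
        B (x b) (D (x a) (betheVector B x Ω S))
          = peel c x (fun j => lam (x j) / hC c (x j) (x a) * (fC c (x j) (x b))⁻¹)
              (betheVector B x Ω) (insert b (insert a S)) := fun {a b} hab ha hb => by
      have hb' : b ∉ insert a S := by simp [hab.symm, hb]
      rw [ih ha, map_peel, peel_insert hx _ hb' fun T hT =>
        (betheVector_insert hB x Ω fun hbT => hb' (hT hbT)).symm]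
    have hexchange := LinearMap.congr_fun (hDB _ _ (hx.injective.ne hab)) (betheVector B x Ω S)
    simp only [LinearMap.add_apply, LinearMap.smul_apply, Module.End.mul_apply] at hexchange
    rw [betheVector_insert hB x Ω hb, hexchange, hstep hab haS hb, hstep hab.symm hb haS,
      insert_comm b a S]
    simp only [peel_apply, smul_sum, ← sum_add_distrib, smul_smul, ← add_smul]
    refine sum_congr rfl fun j _ => ?_
    congr 1
    simp only [div_eq_mul_inv]
    linear_combination (lam (x j) * ∏ k ∈ (insert a (insert b S)).erase j, fC c (x j) (x k))
      * gC_mul_inv_hC_add hx hab j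

/-- A highest-weight vector of a `2 × 2` monodromy matrix, with weights `λ_1`, `λ_2`. -/
structure IsHighestWeight (T : Fin 2 → Fin 2 → ℂ → Module.End ℂ V) (Ω : V) (lam1 lam2 : ℂ → ℂ) :
    Prop where
  zero_zero : ∀ u, T 0 0 u Ω = lam1 u • Ω
  one_one : ∀ u, T 1 1 u Ω = lam2 u • Ω
  one_zero : ∀ u, T 1 0 u Ω = 0

lemma isHighestWeight_bareMonodromy {N : Fin 2 → Fin 2 → ℂ → Module.End ℂ V} {β1 β2 : ℂ}
    {lam1 lam2 : ℂ → ℂ} (h11 : ∀ u, N 0 0 u Ω = lam1 u • Ω + β2 • N 0 1 u Ω)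
    (h22 : ∀ u, N 1 1 u Ω = lam2 u • Ω + β1 • N 0 1 u Ω)
    (h21 : ∀ u, N 1 0 u Ω = (β1 * lam1 u + β2 * lam2 u) • Ω + (β1 * β2) • N 0 1 u Ω) :
    IsHighestWeight (bareMonodromy β1 β2 N) Ω lam1 lam2 where
  zero_zero u := by simp [bareMonodromy_zero_zero, h11]
  one_one u := by simp [bareMonodromy_one_one, h22]
  one_zero u := by
    simp only [bareMonodromy_one_zero, LinearMap.add_apply, LinearMap.sub_apply,
      LinearMap.smul_apply, h11, h22, h21]
    module

variable {T : Fin 2 → Fin 2 → ℂ → Module.End ℂ V} {lam1 lam2 : ℂ → ℂ}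

theorem one_one_apply_betheVector (hT : IsYangian c T) (hΩ : IsHighestWeight T Ω lam1 lam2)
    (hx : Regular c x) {S : Finset (Fin p)} {a : Fin p} (ha : a ∉ S) :
    T 1 1 (x a) (betheVector (T 0 1) x Ω S)
      = peel c x (fun j => lam2 (x j) / hC c (x j) (x a)) (betheVector (T 0 1) x Ω)
          (insert a S) := by
  refine apply_betheVector_of_exchange hx (hT.commute_self 0 1) (fun u v huv => ?_) hΩ.one_one ha
  have hDB := hT 1 1 0 1 u v huv
  rw [fC_eq_one_add_gC c huv, gC_swap c v u]
  linear_combination (norm := module) hDB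

theorem zero_zero_apply_betheVector (hT : IsYangian c T) (hΩ : IsHighestWeight T Ω lam1 lam2)
    (hx : Regular c x) {S : Finset (Fin p)} {a : Fin p} (ha : a ∉ S) :
    T 0 0 (x a) (betheVector (T 0 1) x Ω S)
      = peel (-c) x (fun j => lam1 (x j) / hC (-c) (x j) (x a)) (betheVector (T 0 1) x Ω)
          (insert a S) := by
  refine apply_betheVector_of_exchange hx.neg (hT.commute_self 0 1) (fun u v huv => ?_)
    hΩ.zero_zero ha
  have hBA := hT 0 1 0 0 v u huv.symm
  rw [fC_neg, gC_neg, fC_eq_one_add_gC c huv.symm, gC_swap c u v]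
  rw [gC_swap c v u] at hBA ⊢
  linear_combination (norm := module) -hBA

lemma inv_hC_mul_inv_hC_neg (hx : Regular c x) {a b : Fin p} (hab : a ≠ b) (i j : Fin p) :
    (hC c (x j) (x a))⁻¹ * (fC c (x j) (x b))⁻¹
          * ((hC (-c) (x i) (x a))⁻¹ * (fC (-c) (x i) (x b))⁻¹)
        + gC c (x a) (x b) *
          ((hC c (x j) (x a))⁻¹ * (fC c (x j) (x b))⁻¹ * (hC (-c) (x i) (x b))⁻¹
            - (hC c (x j) (x b))⁻¹ * (fC c (x j) (x a))⁻¹ * (hC (-c) (x i) (x a))⁻¹)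
      = (hC c (x j) (x a))⁻¹ * (hC (-c) (x i) (x a))⁻¹ := by
  have := hx.sub_add_ne_zero j a
  have := hx.sub_add_ne_zero j b
  have := hx.neg.sub_add_ne_zero i a
  have := hx.neg.sub_add_ne_zero i b
  have := hx.sub_ne_zero hab
  simp only [inv_fC, hC, inv_div, gC]
  field_simp
  ring

theorem one_zero_apply_betheVector (hT : IsYangian c T) (hΩ : IsHighestWeight T Ω lam1 lam2)
    (hx : Regular c x) {S : Finset (Fin p)} {a : Fin p} (ha : a ∉ S) :
    T 1 0 (x a) (betheVector (T 0 1) x Ω S)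
      = peel c x (fun j => lam2 (x j) / hC c (x j) (x a))
          (peel (-c) x (fun j => lam1 (x j) / hC (-c) (x j) (x a)) (betheVector (T 0 1) x Ω))
          (insert a S) := by
  have hAD : ∀ {S : Finset (Fin p)} {a b : Fin p}, a ≠ b → a ∉ S → b ∉ S →
      T 0 0 (x b) (T 1 1 (x a) (betheVector (T 0 1) x Ω S))
        = peel c x (fun j => lam2 (x j) / hC c (x j) (x a) * (fC c (x j) (x b))⁻¹)
            (peel (-c) x (fun j => lam1 (x j) / hC (-c) (x j) (x b)) (betheVector (T 0 1) x Ω))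
            (insert b (insert a S)) := fun {S a b} hab ha hb => by
    have hb' : b ∉ insert a S := by simp [hab.symm, hb]
    rw [one_one_apply_betheVector hT hΩ hx ha, map_peel, peel_insert hx _ hb' fun Y hY =>
      zero_zero_apply_betheVector hT hΩ hx fun hbY => hb' (hY hbY)]
  have hB := hT.commute_self 0 1
  induction S using Finset.induction_on generalizing a with
  | empty => simp [betheVector_empty, peel_apply, hΩ.one_zero]
  | insert b S hb ih =>
    obtain ⟨hab, haS⟩ : a ≠ b ∧ a ∉ S := by simpa using ha
    have hb' : b ∉ insert a S := by simp [hab.symm, hb]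
    have hBC : T 0 1 (x b) (T 1 0 (x a) (betheVector (T 0 1) x Ω S))
        = peel c x (fun j => lam2 (x j) / hC c (x j) (x a) * (fC c (x j) (x b))⁻¹)
            (peel (-c) x (fun j => lam1 (x j) / hC (-c) (x j) (x a) * (fC (-c) (x j) (x b))⁻¹)
              (betheVector (T 0 1) x Ω)) (insert a (insert b S)) := by
      rw [ih haS, map_peel, insert_comm, peel_insert hx _ hb' fun Y hY => ?_]
      have hbY : b ∉ Y := fun hbY => hb' (hY hbY)
      rw [map_peel, peel_insert hx.neg _ hbY fun Z hZ =>
        (betheVector_insert hB x Ω fun hbZ => hbY (hZ hbZ)).symm]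
    have hexchange := LinearMap.congr_fun (hT 1 0 0 1 _ _ (hx.injective.ne hab))
      (betheVector (T 0 1) x Ω S)
    simp only [LinearMap.sub_apply, LinearMap.smul_apply, Module.End.mul_apply] at hexchange
    rw [betheVector_insert hB x Ω hb, sub_eq_iff_eq_add.1 hexchange, hBC, hAD hab haS hb,
      hAD hab.symm hb haS, insert_comm b a S]
    simp only [peel_apply, smul_sum, ← sum_sub_distrib, ← sum_add_distrib, smul_smul, ← sub_smul,
      ← add_smul]
    refine sum_congr rfl fun j _ => sum_congr rfl fun i _ => ?_
    congr 1
    simp only [div_eq_mul_inv]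
    linear_combination (lam2 (x j) * lam1 (x i)
      * (∏ k ∈ (insert a (insert b S)).erase j, fC c (x j) (x k))
      * ∏ k ∈ ((insert a (insert b S)).erase j).erase i, fC (-c) (x i) (x k))
      * inv_hC_mul_inv_hC_neg hx hab i j

end BetheVectorAction

section ScalarProduct

variable {V : Type*} [AddCommGroup V] [Module ℂ V] {p : ℕ} {c β1 β2 : ℂ} {x : Fin p → ℂ} {Ω : V}
  {N : Fin 2 → Fin 2 → ℂ → Module.End ℂ V} {lam1 lam2 : ℂ → ℂ}

-- Up to the factor `β_1 β_2`, the combination `T_21 + β_1 T_11 + β_2 T_22 + β_1 β_2 T_12` of the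
-- bare entries factorizes on Bethe vectors.
theorem one_zero_apply_betheVector_of_bareMonodromy (hN : IsYangian c N)
    (hΩ : IsHighestWeight (bareMonodromy β1 β2 N) Ω lam1 lam2) (hβ1 : β1 ≠ 0) (hβ2 : β2 ≠ 0)
    (hx : Regular c x) {S : Finset (Fin p)} {a : Fin p} (ha : a ∉ S) :
    N 1 0 (x a) (betheVector (N 0 1) x Ω S)
      = (β1 * β2) • adjoin c x (fun j => (-β1)⁻¹ * lam2 (x j)) ∅ a
          (adjoin (-c) x (fun j => (-β2)⁻¹ * lam1 (x j)) ∅ a (betheVector (N 0 1) x Ω))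
          (insert a S) := by
  have hT := hN.bareMonodromy β1 β2
  have h01 : bareMonodromy β1 β2 N 0 1 = N 0 1 := funext (bareMonodromy_zero_one β1 β2 N)
  have hadjoin : ∀ (d b : ℂ) (lam : ℂ → ℂ) (G : Finset (Fin p) → V),
      adjoin d x (fun j => b * lam (x j)) ∅ a G
        = G - b • peel d x (fun j => lam (x j) / hC d (x j) (x a)) G := fun d b lam G => by
    simp only [adjoin_apply, prod_empty, mul_one, mul_div_assoc]
    rw [← LinearMap.smul_apply, ← map_smul]
    rfl
  have h11 := zero_zero_apply_betheVector hT hΩ hx ha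
  have h22 := one_one_apply_betheVector hT hΩ hx ha
  have h21 := one_zero_apply_betheVector hT hΩ hx ha
  rw [h01, bareMonodromy_zero_zero, LinearMap.sub_apply, LinearMap.smul_apply] at h11
  rw [h01, bareMonodromy_one_one, LinearMap.sub_apply, LinearMap.smul_apply] at h22
  rw [h01, bareMonodromy_one_zero] at h21
  simp only [LinearMap.add_apply, LinearMap.sub_apply, LinearMap.smul_apply] at h21
  simp only [hadjoin, map_sub, map_smul, Pi.sub_apply, Pi.smul_apply,
    betheVector_insert (hN.commute_self 0 1) x Ω ha, ← h11, ← h22, ← h21, smul_sub, smul_smul]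
  match_scalars <;> field_simp <;> ring

theorem map_opProd_betheVector (hN : IsYangian c N)
    (hΩ : IsHighestWeight (bareMonodromy β1 β2 N) Ω lam1 lam2) (hβ1 : β1 ≠ 0) (hβ2 : β2 ≠ 0)
    (hx : Regular c x) (μ : ℂ) (L : V →ₗ[ℂ] ℂ)
    (hL : ∀ S, L (betheVector (N 0 1) x Ω S)
      = fConv c x (dressedIzergin c μ x (fun j => (-β1)⁻¹ * lam2 (x j)) ∅)
          (dressedIzergin (-c) μ x (fun j => (-β2)⁻¹ * lam1 (x j)) ∅) S)
    {U S : Finset (Fin p)} (hUS : Disjoint U S) :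
    L (opProd (N 1 0) x U (betheVector (N 0 1) x Ω S))
      = (β1 * β2) ^ #U * fConv c x (dressedIzergin c μ x (fun j => (-β1)⁻¹ * lam2 (x j)) U)
          (dressedIzergin (-c) μ x (fun j => (-β2)⁻¹ * lam1 (x j)) U) (U ∪ S) := by
  set ρ2 : Fin p → ℂ := fun j => (-β1)⁻¹ * lam2 (x j) with hρ2
  set ρ1 : Fin p → ℂ := fun j => (-β2)⁻¹ * lam1 (x j) with hρ1
  induction U using Finset.induction_on generalizing S with
  | empty => simp [opProd_empty, hL]
  | insert a U ha ih =>
    obtain ⟨haS, hUS⟩ := disjoint_insert_left.1 hUS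
    have hUaS : Disjoint U (insert a S) := disjoint_insert_right.2 ⟨ha, hUS⟩
    have hstep : L (opProd (N 1 0) x (insert a U) (betheVector (N 0 1) x Ω S))
        = β1 * β2 * adjoin c x ρ2 ∅ a (adjoin (-c) x ρ1 ∅ a fun T =>
            L (opProd (N 1 0) x U (betheVector (N 0 1) x Ω T))) (insert a S) := by
      have hmap : ∀ d ρ G X, L (opProd (N 1 0) x U (adjoin d x ρ ∅ a G X))
          = adjoin d x ρ ∅ a (fun T => L (opProd (N 1 0) x U (G T))) X := fun d ρ =>
        map_adjoin (L ∘ₗ opProd (N 1 0) x U) d x ρ ∅ a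
      rw [opProd_insert' (hN.commute_self 1 0) x ha, Module.End.mul_apply,
        one_zero_apply_betheVector_of_bareMonodromy hN hΩ hβ1 hβ2 hx haS, ← hρ1, ← hρ2, map_smul,
        map_smul, smul_eq_mul]
      simp only [hmap]
    rw [hstep, adjoin_empty_eq_adjoin_union hx ρ2 a hUaS fun T hT =>
      adjoin_empty_eq_adjoin_union hx.neg ρ1 a (hUaS.mono_right hT)
        (H := (β1 * β2) ^ #U
          • fConv c x (dressedIzergin c μ x ρ2 U) (dressedIzergin (-c) μ x ρ1 U))
        fun Z hZ => ih (hUaS.mono_right (hZ.trans hT)),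
      map_smul, map_smul, adjoin_neg_fConv, adjoin_fConv, ← dressedIzergin_insert μ hx ρ2 ha,
      ← dressedIzergin_insert μ hx.neg ρ1 ha, Pi.smul_apply, smul_eq_mul, ← mul_assoc, ← pow_succ',
      card_insert_of_notMem ha, union_insert, insert_union]

lemma prod_inv_mul_eq_zpow_mul (b : ℂ) (r : ι → ℂ) (I : Finset ι) :
    ∏ j ∈ I, b⁻¹ * r j = b ^ (-(#I : ℤ)) * ∏ j ∈ I, r j := by
  rw [prod_mul_distrib, prod_const, zpow_neg, zpow_natCast, inv_pow]

theorem map_betheVector_eq_fConv {μ : ℂ} {B : ℂ → Module.End ℂ V}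
    (hB : ∀ u v, Commute (B u) (B v)) (L : V →ₗ[ℂ] ℂ)
    (hL : ∀ (q : ℕ) (w : Fin q → ℂ), Generic c w → L (opProd B w univ Ω)
      = (1 - μ) ^ q * ∑ I : Finset (Fin q), (-β1) ^ (-(#I : ℤ)) * (-β2) ^ (-(#Iᶜ : ℤ)) *
          (∏ i ∈ I, lam2 (w i)) * (∏ i ∈ Iᶜ, lam1 (w i)) * fSS c w I Iᶜ)
    (hx : Generic c x) (S : Finset (Fin p)) :
    L (betheVector B x Ω S)
      = fConv c x (dressedIzergin c μ x (fun j => (-β1)⁻¹ * lam2 (x j)) ∅)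
          (dressedIzergin (-c) μ x (fun j => (-β2)⁻¹ * lam1 (x j)) ∅) S := by
  obtain ⟨q, e, rfl⟩ : ∃ (q : ℕ) (e : Fin q ↪ Fin p), S = univ.map e :=
    ⟨#S, (S.orderEmbOfFin rfl).toEmbedding, by
      rw [← coe_inj, coe_map, coe_univ, Set.image_univ]
      exact (S.range_orderEmbOfFin rfl).symm⟩
  have hxe : Generic c (x ∘ e) := fun i j hij => hx _ _ (e.injective.ne hij)
  rw [betheVector, opProd_map hB, hL q _ hxe, fConv_map, fConv_univ, mul_sum]
  refine sum_congr rfl fun I _ => ?_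
  have hpow : (1 - μ) ^ q = (1 - μ) ^ #I * (1 - μ) ^ #Iᶜ := by
    rw [← pow_add, card_add_card_compl, Fintype.card_fin]
  simp only [dressedIzergin_empty _ _ (injective_of_generic hx), prod_inv_mul_eq_zpow_mul, card_map,
    prod_map, hpow, fSS, Function.comp_apply]
  ring

lemma mul_fConv_dressedIzergin_univ {n : ℕ} {γ1 γ2 : ℂ} (hγ1 : γ1 ≠ 0) (hγ2 : γ2 ≠ 0)
    (hx : Regular c x) (μ : ℂ) (e : Fin n ↪ Fin p) :
    (γ1 * γ2) ^ n * fConv c x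
        (dressedIzergin c μ x (fun j => γ1⁻¹ * lam2 (x j)) (univ.map e))
        (dressedIzergin (-c) μ x (fun j => γ2⁻¹ * lam1 (x j)) (univ.map e)) univ
      = ∑ I : Finset (Fin p), γ1 ^ ((n : ℤ) - #I) * γ2 ^ ((n : ℤ) - #Iᶜ) *
          (∏ i ∈ I, lam2 (x i)) * (∏ i ∈ Iᶜ, lam1 (x i)) * fSS c x I Iᶜ *
          KIz c μ (x ∘ e) (fun i => restr x I i + c) *
          KIzBar c μ (x ∘ e) (fun i => restr x Iᶜ i - c) := by
  rw [fConv_univ, mul_sum]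
  refine sum_congr rfl fun I _ => ?_
  rw [mul_pow, sub_eq_add_neg (n : ℤ), sub_eq_add_neg (n : ℤ), zpow_add₀ hγ1, zpow_add₀ hγ2,
    zpow_natCast, zpow_natCast]
  simp only [dressedIzergin_map_univ μ hx, dressedIzergin_map_univ μ hx.neg,
    prod_inv_mul_eq_zpow_mul, KIzBar, restr, fSS, sub_eq_add_neg]
  ring

lemma disjoint_map_castAddEmb_map_natAddEmb (n m : ℕ) :
    Disjoint (univ.map (Fin.castAddEmb m)) (univ.map (Fin.natAddEmb n)) := by
  simp only [disjoint_left, mem_map, mem_univ, true_and, not_exists]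
  rintro _ ⟨i, rfl⟩ j hij
  have hval : n + (j : ℕ) = i := congrArg Fin.val hij
  omega

lemma map_castAddEmb_union_map_natAddEmb (n m : ℕ) :
    univ.map (Fin.castAddEmb m) ∪ univ.map (Fin.natAddEmb n) = univ := by
  refine eq_univ_of_forall fun i => ?_
  induction i using Fin.addCases <;> simp

end ScalarProduct

end Bethe

/-- The scalar product of modified Bethe vectors (Theorem `MSPfor` of the paper). -/
theorem stmt6
    (c : ℂ) (hc : c ≠ 0) (β1 β2 μ : ℂ) (hβ1 : β1 ≠ 0) (hβ2 : β2 ≠ 0)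
    (V : Type*) [AddCommGroup V] [Module ℂ V]
    (N : Fin 2 → Fin 2 → ℂ → Module.End ℂ V)
    (vac : V) (lam1 lam2 : ℂ → ℂ) (vacDual : V →ₗ[ℂ] ℂ)
    (hYang : ∀ (i j k l : Fin 2) (x y : ℂ), x ≠ y →
      N i j x * N k l y - N k l y * N i j x
        = gC c x y • (N k j y * N i l x - N k j x * N i l y))
    (hCommSame : ∀ (i j : Fin 2) (x y : ℂ), N i j x * N i j y = N i j y * N i j x)
    (hvac11 : ∀ x : ℂ, N 0 0 x vac = lam1 x • vac + β2 • (N 0 1 x vac))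
    (hvac22 : ∀ x : ℂ, N 1 1 x vac = lam2 x • vac + β1 • (N 0 1 x vac))
    (hvac21 : ∀ x : ℂ, N 1 0 x vac
      = (β1 * lam1 x + β2 * lam2 x) • vac + (β1 * β2) • (N 0 1 x vac))
    (hnorm : vacDual vac = 1)
    (hAvg : ∀ (p : ℕ) (w : Fin p → ℂ), Generic c w →
      vacDual (opProd (N 0 1) w Finset.univ vac)
        = (1 - μ) ^ p * ∑ s : Finset (Fin p),
            (-β1) ^ (-(s.card : ℤ)) * (-β2) ^ (-(sᶜ.card : ℤ)) *
              (∏ i ∈ s, lam2 (w i)) * (∏ i ∈ sᶜ, lam1 (w i)) * fSS c w s sᶜ)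
    (n m : ℕ) (u : Fin n → ℂ) (v : Fin m → ℂ)
    (hgen : Generic c (Fin.append u v)) :
    vacDual ((opProd (N 1 0) u Finset.univ * opProd (N 0 1) v Finset.univ) vac)
      = ∑ s : Finset (Fin (n + m)),
          (-β1) ^ ((n : ℤ) - (s.card : ℤ)) * (-β2) ^ ((n : ℤ) - (sᶜ.card : ℤ)) *
            (∏ i ∈ s, lam2 (Fin.append u v i)) *
            (∏ i ∈ sᶜ, lam1 (Fin.append u v i)) *
            fSS c (Fin.append u v) s sᶜ *
            KIz c μ u (fun i => restr (Fin.append u v) s i + c) *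
            KIzBar c μ u (fun i => restr (Fin.append u v) sᶜ i - c) := by
  have hN : Bethe.IsYangian c N := hYang
  have hB := hN.commute_self 0 1
  have hx := Bethe.Regular.of_generic hc hgen
  have hΩ := Bethe.isHighestWeight_bareMonodromy hvac11 hvac22 hvac21
  have hL := Bethe.map_betheVector_eq_fConv hB vacDual hAvg hgen
  have hu : Fin.append u v ∘ Fin.castAddEmb m = u := funext (Fin.append_left u v)
  have hv : Fin.append u v ∘ Fin.natAddEmb n = v := funext (Fin.append_right u v)
  have hmain := Bethe.map_opProd_betheVector hN hΩ hβ1 hβ2 hx μ vacDual hL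
    (Bethe.disjoint_map_castAddEmb_map_natAddEmb n m)
  rw [Bethe.betheVector, Bethe.opProd_map (hN.commute_self 1 0), Bethe.opProd_map hB, hu, hv,
    Bethe.map_castAddEmb_union_map_natAddEmb, Finset.card_map, Finset.card_fin,
    ← neg_mul_neg β1 β2, Bethe.mul_fConv_dressedIzergin_univ (neg_ne_zero.2 hβ1)
      (neg_ne_zero.2 hβ2) hx, hu] at hmain
  exact hmain
end
end
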